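/- arXiv:1303.3545 — 2 statements merged into one kernel-verified Lean document; each statement's English description precedes it below -/
import Mathlib

section
/- Let T be a smooth symmetric 2-tensor field on an open set of ℝ^3 containing the closed ball B̄_1(p), let ν(x) = x - p be the outward unit normal to ∂B_1(p), and let tr_S(T)(x) = ∑_j T_{jj}(x) - T(ν(x),ν(x)) for x ∈ ∂B_1(p). Then ∫_{B_1(p)} ∑_{i,j}(D_i D_j T_{ij} - D_i D_i T_{jj}) dV = ∫_{∂B_1(p)} ( 2 tr_{ℝ^3}(T) - 3 tr_S(T) - tr_S(D_ν T) ) dA. -/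
open MeasureTheory Real

noncomputable abbrev E3 : Type := EuclideanSpace ℝ (Fin 3)

/-- The standard surface measure on the unit sphere in `ℝ³`. -/
noncomputable def sphereMeasure : Measure (Metric.sphere (0 : E3) 1) :=
  (volume : Measure E3).toSphere

/-- The `i`-th standard basis vector of `ℝ³`. -/
noncomputable def e3 (i : Fin 3) : E3 := EuclideanSpace.single i 1

/-- Partial derivative `D_i f`. -/
noncomputable def pd (f : E3 → ℝ) (i : Fin 3) (x : E3) : ℝ := fderiv ℝ f x (e3 i)

/-- The trace `tr_{ℝ³}(T) = ∑_j T_jj`. -/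
def trT (T : E3 → Fin 3 → Fin 3 → ℝ) (x : E3) : ℝ := ∑ j, T x j j

/-- The quadratic form `T(v, v) = ∑_{i,j} T_ij v_i v_j`. -/
def quadT (T : E3 → Fin 3 → Fin 3 → ℝ) (x : E3) (v : E3) : ℝ :=
  ∑ i, ∑ j, T x i j * v i * v j

/-- `∑_{i,j} (D_i D_j T_ij - D_i D_i T_jj)`, the leading term of the scalar curvature. -/
noncomputable def scalDiv (T : E3 → Fin 3 → Fin 3 → ℝ) (x : E3) : ℝ :=
  ∑ i, ∑ j, (pd (pd (fun z => T z i j) j) i x - pd (pd (fun z => T z j j) i) i x)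

/-! If `h` is `C¹` with compact support, then `∫ D_v h = 0`. Applied in polar coordinates to
cut-off homogeneous extensions of `f`, this yields integration by parts on the unit sphere of an
`n`-dimensional space, `∫ D_v f = ∫ ⟪y, v⟫ (D_y f + (n - 1) f)`. With `f (r • y)` in place of `f`,
the right-hand side is, up to a power of `r`, the integral of a radial derivative, so integrating
in `r` gives the divergence theorem on balls.

The divergence theorem for `V_i = ∑_j (D_j T_ij - D_i T_jj)` produces the boundary terms
`∑_{i,j} y_i D_j T_ij` and `-∑_j D_y T_jj`; integrating the former by parts on the sphere, applied
to the functions `y_i T_ij`, leaves only derivatives in the normal direction `y`. -/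

section Polar

open Metric Module Set

variable {E F : Type*} [NormedAddCommGroup E] [NormedSpace ℝ E] [FiniteDimensional ℝ E]
  [MeasurableSpace E] [BorelSpace E] {μ : Measure E} [μ.IsAddHaarMeasure]
  [NormedAddCommGroup F]

theorem integrable_toSphere_of_continuousOn {g : E → F} (hg : ContinuousOn g (sphere 0 1)) :
    Integrable (fun y : sphere (0 : E) 1 ↦ g y) μ.toSphere :=
  (continuousOn_iff_continuous_domRestrict.1 hg).integrable_of_hasCompactSupport
    (.of_compactSpace _)

variable [NormedSpace ℝ F]

theorem integral_volumeIoiPow (n : ℕ) (f : ℝ → F) :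
    ∫ r : Ioi (0 : ℝ), f r ∂Measure.volumeIoiPow n = ∫ r in Ioi (0 : ℝ), r ^ n • f r := by
  simp only [Measure.volumeIoiPow, ENNReal.ofReal]
  rw [integral_withDensity_eq_integral_smul (measurable_subtype_coe.pow_const _).real_toNNReal,
    integral_subtype_comap measurableSet_Ioi fun r ↦ (r ^ n).toNNReal • f r]
  refine setIntegral_congr_fun measurableSet_Ioi fun r hr ↦ ?_
  rw [NNReal.smul_def, Real.coe_toNNReal _ (pow_nonneg (mem_Ioi.1 hr).le _)]

theorem integral_eq_integral_Ioi_integral_toSphere [Nontrivial E] {g : E → F}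
    (hg : Integrable g μ) :
    ∫ x, g x ∂μ =
      ∫ r in Ioi (0 : ℝ), r ^ (finrank ℝ E - 1) •
        ∫ y : sphere (0 : E) 1, g (r • y) ∂μ.toSphere := by
  have hpolar := μ.measurePreserving_homeomorphUnitSphereProd
  have hemb := (homeomorphUnitSphereProd E).measurableEmbedding
  have hcomp : ((fun z : sphere (0 : E) 1 × Ioi (0 : ℝ) ↦ g ((z.2 : ℝ) • (z.1 : E))) ∘
      homeomorphUnitSphereProd E) = fun x : ({0}ᶜ : Set E) ↦ g x := by
    ext x
    have hx : ‖(x : E)‖ ≠ 0 := norm_ne_zero_iff.2 x.2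
    simp [smul_smul, hx]
  have hint : Integrable (fun z : sphere (0 : E) 1 × Ioi (0 : ℝ) ↦ g ((z.2 : ℝ) • (z.1 : E)))
      (μ.toSphere.prod (.volumeIoiPow (finrank ℝ E - 1))) := by
    rw [← hpolar.integrable_comp_emb hemb, hcomp]
    exact (integrableOn_iff_comap_subtypeVal (measurableSet_singleton _).compl).1 hg.integrableOn
  calc
    ∫ x, g x ∂μ = ∫ x : ({0}ᶜ : Set E), g x ∂μ.comap (↑) := by
      rw [integral_subtype_comap (measurableSet_singleton _).compl, restrict_compl_singleton]
    _ = ∫ z : sphere (0 : E) 1 × Ioi (0 : ℝ), g ((z.2 : ℝ) • (z.1 : E))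
          ∂μ.toSphere.prod (.volumeIoiPow (finrank ℝ E - 1)) := by
      rw [← hpolar.integral_comp hemb]
      exact congrArg (fun h ↦ ∫ x, h x ∂μ.comap (↑)) hcomp.symm
    _ = _ := by
      rw [integral_prod_symm _ hint,
        integral_volumeIoiPow _ fun r ↦ ∫ y : sphere (0 : E) 1, g (r • (y : E)) ∂μ.toSphere]

theorem setIntegral_closedBall_eq_integral_toSphere [Nontrivial E] {g : E → F} {R : ℝ}
    (hR : 0 ≤ R) (hg : IntegrableOn g (closedBall 0 R) μ) :
    ∫ x in closedBall 0 R, g x ∂μ =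
      ∫ r in (0)..R, r ^ (finrank ℝ E - 1) • ∫ y : sphere (0 : E) 1, g (r • y) ∂μ.toSphere := by
  have hindicator : EqOn
      (fun r : ℝ ↦ r ^ (finrank ℝ E - 1) •
        ∫ y : sphere (0 : E) 1, (closedBall 0 R).indicator g (r • y) ∂μ.toSphere)
      ((Iic R).indicator fun r ↦ r ^ (finrank ℝ E - 1) •
        ∫ y : sphere (0 : E) 1, g (r • y) ∂μ.toSphere) (Ioi 0) := by
    intro r (hr : 0 < r)
    by_cases hrR : r ≤ R <;> simp [indicator, norm_smul, abs_of_pos hr, hrR]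
  rw [← integral_indicator measurableSet_closedBall, integral_eq_integral_Ioi_integral_toSphere
    (hg.integrable_indicator measurableSet_closedBall),
    setIntegral_congr_fun measurableSet_Ioi hindicator, setIntegral_indicator measurableSet_Iic,
    Ioi_inter_Iic, intervalIntegral.integral_of_le hR]

theorem integral_clm_toSphere_eq_zero [Nontrivial E] [CompleteSpace F] (L : E →L[ℝ] F) :
    ∫ y : sphere (0 : E) 1, L y ∂μ.toSphere = 0 := by
  have hodd : ∫ x in closedBall 0 1, L x ∂μ = -∫ x in closedBall 0 1, L x ∂μ := by
    have h := (Measure.measurePreserving_neg μ).setIntegral_preimage_emb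
      (Homeomorph.neg E).measurableEmbedding L (closedBall 0 1)
    simpa [integral_neg] using h.symm
  have hradial : ∫ x in closedBall 0 1, L x ∂μ =
      (∫ r in (0 : ℝ)..1, r ^ (finrank ℝ E - 1) * r) • ∫ y : sphere (0 : E) 1, L y ∂μ.toSphere := by
    have hint : IntegrableOn L (closedBall 0 1) μ :=
      L.continuous.continuousOn.integrableOn_compact (isCompact_closedBall _ _)
    rw [setIntegral_closedBall_eq_integral_toSphere zero_le_one hint,
      ← intervalIntegral.integral_smul_const]
    simp only [map_smul, integral_smul, mul_smul]
  have hpos : (∫ r in (0 : ℝ)..1, r ^ (finrank ℝ E - 1) * r) ≠ 0 := by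
    simp only [← pow_succ, integral_pow, one_pow, ne_eq, Nat.succ_ne_zero, not_false_eq_true,
      zero_pow, sub_zero]
    positivity
  rw [eq_neg_iff_add_eq_zero, ← two_smul ℝ, smul_eq_zero_iff_right two_ne_zero, hradial] at hodd
  exact (smul_eq_zero_iff_right hpos).1 hodd

theorem integral_fderiv_apply_eq_zero {f : E → F} (hf : ContDiff ℝ 1 f)
    (hc : HasCompactSupport f) (v : E) : ∫ x, fderiv ℝ f x v ∂μ = 0 := by
  have hint : Integrable (fun x ↦ fderiv ℝ f x v) μ :=
    ((hf.continuous_fderiv one_ne_zero).clm_apply continuous_const).integrable_of_hasCompactSupport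
      (hc.fderiv_apply ℝ v)
  simpa using integral_smul_fderiv_eq_neg_fderiv_smul_of_integrable (μ := μ) (v := v)
    (f := fun _ ↦ (1 : ℝ)) (g := f) (by simp) (by simpa using hint)
    (by simpa using hf.continuous.integrable_of_hasCompactSupport hc) (by simp)
    fun x _ ↦ hf.differentiable one_ne_zero x

end Polar

section Ray

open Set

variable {E F : Type*} [NormedAddCommGroup E] [NormedSpace ℝ E]
  [NormedAddCommGroup F] [NormedSpace ℝ F]

theorem continuousOn_fderiv_of_contDiffAt {f : E → F} {s : Set E}
    (hf : ∀ x ∈ s, ContDiffAt ℝ 1 f x) : ContinuousOn (fderiv ℝ f) s :=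
  fun x hx ↦ ((hf x hx).continuousAt_fderiv one_ne_zero).continuousWithinAt

theorem hasDerivAt_pow_smul_comp_smul {f : E → F} {r : ℝ} {y : E}
    (hf : DifferentiableAt ℝ f (r • y)) (m : ℕ) :
    HasDerivAt (fun t : ℝ ↦ t ^ m • f (t • y))
      (r ^ m • fderiv ℝ f (r • y) y + (m * r ^ (m - 1)) • f (r • y)) r := by
  have hray := hf.hasFDerivAt.comp_hasDerivAt r ((hasDerivAt_id r).smul_const y)
  simpa only [one_smul] using! (hasDerivAt_pow m r).fun_smul hray

theorem continuousOn_deriv_pow_smul_comp_smul {f : E → F} {s : Set E}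
    (hf : ∀ x ∈ s, ContDiffAt ℝ 1 f x) (m : ℕ) :
    ContinuousOn (fun z : ℝ × E ↦ deriv (fun t : ℝ ↦ t ^ m • f (t • z.2)) z.1)
      {z | z.1 • z.2 ∈ s} := by
  have hmaps : MapsTo (fun z : ℝ × E ↦ z.1 • z.2) {z | z.1 • z.2 ∈ s} s := fun z hz ↦ hz
  have hsmul : Continuous fun z : ℝ × E ↦ z.1 • z.2 := by fun_prop
  have hf₀ : ContinuousOn (fun z : ℝ × E ↦ f (z.1 • z.2)) {z | z.1 • z.2 ∈ s} :=
    ContinuousOn.comp (g := f) (fun x hx ↦ (hf x hx).continuousAt.continuousWithinAt)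
      hsmul.continuousOn hmaps
  have hf₁ : ContinuousOn (fun z : ℝ × E ↦ fderiv ℝ f (z.1 • z.2)) {z | z.1 • z.2 ∈ s} :=
    (continuousOn_fderiv_of_contDiffAt hf).comp hsmul.continuousOn hmaps
  refine ContinuousOn.congr (f := fun z ↦ z.1 ^ m • fderiv ℝ f (z.1 • z.2) z.2 +
    ((m : ℝ) * z.1 ^ (m - 1)) • f (z.1 • z.2)) ?_ fun z hz ↦
      (hasDerivAt_pow_smul_comp_smul ((hf _ hz).differentiableAt one_ne_zero) m).deriv
  exact (ContinuousOn.smul (by fun_prop) (hf₁.clm_apply continuousOn_snd)).add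
    (ContinuousOn.smul (by fun_prop) hf₀)

theorem integral_deriv_pow_smul_comp_smul [CompleteSpace F] {f : E → F}
    {y : E} {a b : ℝ} (hf : ∀ r ∈ uIcc a b, ContDiffAt ℝ 1 f (r • y)) (m : ℕ) :
    ∫ r in a..b, deriv (fun t : ℝ ↦ t ^ m • f (t • y)) r =
      b ^ m • f (b • y) - a ^ m • f (a • y) := by
  refine intervalIntegral.integral_deriv_eq_sub (f := fun t : ℝ ↦ t ^ m • f (t • y))
    (fun r hr ↦ (hasDerivAt_pow_smul_comp_smul
      ((hf r hr).differentiableAt one_ne_zero) m).differentiableAt)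
    (ContinuousOn.intervalIntegrable ?_)
  exact (continuousOn_deriv_pow_smul_comp_smul (forall_mem_image.2 hf) m).comp (f := fun r ↦ (r, y))
    (by fun_prop) fun r hr ↦ mem_image_of_mem _ hr

end Ray

section RadialExtension

open Metric Module Set NormedSpace
open scoped RealInnerProductSpace

variable {E F : Type*} [NormedAddCommGroup E] [InnerProductSpace ℝ E]
  [NormedAddCommGroup F] [NormedSpace ℝ F]

theorem hasFDerivAt_norm {x : E} (hx : x ≠ 0) :
    HasFDerivAt (‖·‖) (innerSL ℝ (normalize x)) x := by
  have h := (hasStrictFDerivAt_norm_sq x).hasFDerivAt.sqrt (pow_ne_zero 2 (norm_ne_zero_iff.2 hx))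
  simp only [Real.sqrt_sq (norm_nonneg _)] at h
  refine h.congr_fderiv ?_
  ext v
  simp [NormedSpace.normalize]
  field_simp

theorem hasFDerivAt_normalize {x : E} (hx : x ≠ 0) :
    HasFDerivAt (normalize : E → E)
      (‖x‖⁻¹ • (.id ℝ E - (innerSL ℝ (normalize x)).smulRight (normalize x))) x := by
  have h := ((hasDerivAt_inv (norm_ne_zero_iff.2 hx)).comp_hasFDerivAt x
    (hasFDerivAt_norm hx)).smul (hasFDerivAt_id (𝕜 := ℝ) x)
  refine h.congr_fderiv ?_
  ext v
  simp only [Function.comp_apply, neg_smul, id_eq, add_apply, smul_apply,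
    ContinuousLinearMap.id_apply, ContinuousLinearMap.smulRight_apply, neg_apply,
    coe_innerSL_apply, smul_eq_mul, sub_apply, NormedSpace.normalize]
  match_scalars <;> ring

theorem contDiffAt_normalize {k : WithTop ℕ∞} {x : E} (hx : x ≠ 0) :
    ContDiffAt ℝ k (normalize : E → E) x :=
  ((contDiffAt_norm ℝ hx).inv (norm_ne_zero_iff.2 hx)).smul contDiffAt_id

/-- The degree-one homogeneous extension of `f` from the unit sphere, cut off by the factor
`φ ‖x‖`; it serves as a test function for tangential integration by parts. Degree one keeps
negative powers of `‖x‖` out of its derivative. -/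
noncomputable def radialExtension (φ : ℝ → ℝ) (f : E → F) (x : E) : F :=
  φ ‖x‖ • ‖x‖ • f (normalize x)

theorem contDiff_radialExtension {k : WithTop ℕ∞} {φ : ℝ → ℝ} {f : E → F} (hφ : ContDiff ℝ k φ)
    (hφ0 : tsupport φ ⊆ Ioi 0) (hf : ∀ y ∈ sphere 0 1, ContDiffAt ℝ k f y) :
    ContDiff ℝ k (radialExtension φ f) := by
  refine contDiff_iff_contDiffAt.2 fun x ↦ ?_
  by_cases hx : x ∈ tsupport (radialExtension φ f)
  swap
  · exact contDiffAt_const.congr_of_eventuallyEq (notMem_tsupport_iff_eventuallyEq.1 hx)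
  have hx0 : x ≠ 0 := norm_pos_iff.1 <| hφ0 <| tsupport_comp_subset_preimage φ continuous_norm <|
    tsupport_smul_subset_left (φ ∘ norm) _ hx
  have hnorm : ContDiffAt ℝ k (‖·‖) x := contDiffAt_norm ℝ hx0
  refine (hφ.contDiffAt.comp x hnorm).smul (hnorm.smul (.comp x ?_ (contDiffAt_normalize hx0)))
  exact hf _ (mem_sphere_zero_iff_norm.2 (norm_normalize hx0))

theorem hasCompactSupport_radialExtension [ProperSpace E] {φ : ℝ → ℝ}
    (hφ : HasCompactSupport φ) (f : E → F) : HasCompactSupport (radialExtension φ f) := by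
  have hnorm : HasCompactSupport (φ ∘ norm : E → ℝ) := by
    rw [hasCompactSupport_iff_eventuallyEq, Filter.coclosedCompact_eq_cocompact] at hφ ⊢
    exact (hφ.filter_mono atTop_le_cocompact).comp_tendsto tendsto_norm_cocompact_atTop
  exact hnorm.smul_right

theorem fderiv_radialExtension_smul {φ : ℝ → ℝ} {f : E → F} {r : ℝ} {y : E}
    (hφ : DifferentiableAt ℝ φ r) (hf : DifferentiableAt ℝ f y) (hr : 0 < r) (hy : ‖y‖ = 1)
    (v : E) :
    fderiv ℝ (radialExtension φ f) (r • y) v =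
      ((φ r + r * deriv φ r) * ⟪y, v⟫) • f y +
        φ r • (fderiv ℝ f y v - ⟪y, v⟫ • fderiv ℝ f y y) := by
  have hnorm : ‖r • y‖ = r := by rw [norm_smul, hy, mul_one, Real.norm_of_nonneg hr.le]
  have hdir : normalize (r • y) = y := by
    rw [NormedSpace.normalize, hnorm, inv_smul_smul₀ hr.ne']
  have hne : r • y ≠ 0 := norm_pos_iff.1 (hr.trans_eq hnorm.symm)
  have hnorm' := hasFDerivAt_norm hne
  have hf' := HasFDerivAt.comp (r • y) (hdir.symm ▸ hf.hasFDerivAt) (hasFDerivAt_normalize hne)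
  have hφ' := HasDerivAt.comp_hasFDerivAt (r • y) (hnorm.symm ▸ hφ.hasDerivAt) hnorm'
  have h : fderiv ℝ (radialExtension φ f) (r • y) = _ := (hφ'.smul (hnorm'.smul hf')).fderiv
  rw [h]
  simp only [hnorm, hdir, Function.comp_apply, smul_add, Pi.smul_apply', add_apply, smul_apply,
    sub_apply, ContinuousLinearMap.comp_apply, ContinuousLinearMap.smulRight_apply,
    ContinuousLinearMap.id_apply, coe_innerSL_apply, map_smul, map_sub, smul_eq_mul]
  match_scalars <;> field_simp

end RadialExtension

section Cutoff

open Set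

theorem integral_Ioi_pow_mul_deriv {φ : ℝ → ℝ} (hφ : ContDiff ℝ 1 φ) (hc : HasCompactSupport φ)
    (m : ℕ) :
    ∫ r in Ioi (0 : ℝ), r ^ m * (φ r + r * deriv φ r) = -m * ∫ r in Ioi (0 : ℝ), r ^ m * φ r := by
  have hderiv (r : ℝ) : deriv (fun r ↦ r ^ (m + 1) * φ r) r =
      r ^ m * (φ r + r * deriv φ r) + m * (r ^ m * φ r) := by
    rw [deriv_fun_mul (by fun_prop) (hφ.differentiable one_ne_zero r), deriv_pow_field]
    push_cast
    ring
  have hzero : ∫ r in Ioi (0 : ℝ), deriv (fun r ↦ r ^ (m + 1) * φ r) r = 0 := by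
    have h := HasCompactSupport.integral_Ioi_deriv_eq (f := fun r ↦ r ^ (m + 1) * φ r)
      (by fun_prop) hc.mul_left 0
    simpa using h
  have hint₁ : Integrable fun r ↦ r ^ m * (φ r + r * deriv φ r) :=
    Continuous.integrable_of_hasCompactSupport
      (by have := hφ.continuous; have := hφ.continuous_deriv le_rfl; fun_prop)
      (hc.add hc.deriv.mul_left).mul_left
  have hint₂ : Integrable fun r ↦ r ^ m * φ r :=
    Continuous.integrable_of_hasCompactSupport (by have := hφ.continuous; fun_prop) hc.mul_left
  simp only [hderiv] at hzero
  rw [integral_add hint₁.integrableOn (hint₂.const_mul _).integrableOn, integral_const_mul] at hzero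
  linarith

theorem exists_contDiff_tsupport_subset_Ioi_integral_ne_zero (m : ℕ) :
    ∃ φ : ℝ → ℝ, ContDiff ℝ 1 φ ∧ HasCompactSupport φ ∧ tsupport φ ⊆ Ioi 0 ∧
      ∫ r in Ioi (0 : ℝ), r ^ m * φ r ≠ 0 := by
  let φ : ContDiffBump (1 : ℝ) := ⟨1 / 4, 1 / 2, by norm_num, by norm_num⟩
  have hsupp : tsupport φ ⊆ Ioi 0 := by
    rw [φ.tsupport_eq, Real.closedBall_eq_Icc]
    exact fun r hr ↦ lt_of_lt_of_le (by norm_num) hr.1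
  have hφ0 (r : ℝ) (hr : r ∉ Ioi 0) : r ^ m * φ r = 0 := by
    rw [image_eq_zero_of_notMem_tsupport fun h ↦ hr (hsupp h), mul_zero]
  refine ⟨φ, φ.contDiff, φ.hasCompactSupport, hsupp, ?_⟩
  rw [setIntegral_eq_integral_of_forall_compl_eq_zero hφ0]
  refine (Continuous.integral_pos_of_hasCompactSupport_nonneg_nonzero (x := 1) ?_ ?_ ?_ ?_).ne'
  · have := φ.continuous
    fun_prop
  · exact φ.hasCompactSupport.mul_left
  · intro r
    by_cases hr : r ∈ Ioi 0
    · exact mul_nonneg (pow_nonneg (le_of_lt hr) m) φ.nonneg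
    · exact (hφ0 r hr).ge
  · simp [φ.one_of_mem_closedBall (Metric.mem_closedBall_self φ.rIn_pos.le)]

end Cutoff

section SphereAndBall

open Metric Module Set NormedSpace
open scoped RealInnerProductSpace

variable {E F : Type*} [NormedAddCommGroup E] [InnerProductSpace ℝ E] [FiniteDimensional ℝ E]
  [MeasurableSpace E] [BorelSpace E] {μ : Measure E} [μ.IsAddHaarMeasure]
  [NormedAddCommGroup F] [NormedSpace ℝ F]

theorem integrable_fderiv_apply_toSphere {f : E → F} (hf : ∀ y ∈ sphere 0 1, ContDiffAt ℝ 1 f y)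
    (v : E) : Integrable (fun y : sphere (0 : E) 1 ↦ fderiv ℝ f y v) μ.toSphere :=
  integrable_toSphere_of_continuousOn (g := fun y ↦ fderiv ℝ f y v)
    ((continuousOn_fderiv_of_contDiffAt hf).clm_apply continuousOn_const)

theorem integrable_inner_smul_toSphere {f : E → F} (hf : ContinuousOn f (sphere 0 1)) (v : E) :
    Integrable (fun y : sphere (0 : E) 1 ↦ ⟪(y : E), v⟫ • f y) μ.toSphere :=
  integrable_toSphere_of_continuousOn (g := fun y ↦ ⟪y, v⟫ • f y)
    (ContinuousOn.smul (by fun_prop) hf)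

theorem integral_fderiv_radialExtension [Nontrivial E] [CompleteSpace F] {φ : ℝ → ℝ}
    {f : E → F} (hφ : ContDiff ℝ 1 φ) (hc : HasCompactSupport φ) (hφ0 : tsupport φ ⊆ Ioi 0)
    (hf : ∀ y ∈ sphere 0 1, ContDiffAt ℝ 1 f y) (v : E) :
    ∫ x, fderiv ℝ (radialExtension φ f) x v ∂μ =
      (∫ r in Ioi (0 : ℝ), r ^ (finrank ℝ E - 1) * (φ r + r * deriv φ r)) •
          ∫ y : sphere (0 : E) 1, ⟪(y : E), v⟫ • f y ∂μ.toSphere +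
        (∫ r in Ioi (0 : ℝ), r ^ (finrank ℝ E - 1) * φ r) •
          ∫ y : sphere (0 : E) 1, (fderiv ℝ f y v - ⟪(y : E), v⟫ • fderiv ℝ f y y) ∂μ.toSphere := by
  have hext : ContDiff ℝ 1 (radialExtension φ f) := contDiff_radialExtension hφ hφ0 hf
  have hcont : ContinuousOn f (sphere 0 1) := fun y hy ↦ (hf y hy).continuousAt.continuousWithinAt
  have hcont' : ContinuousOn (fun y ↦ fderiv ℝ f y y) (sphere 0 1) :=
    (continuousOn_fderiv_of_contDiffAt hf).clm_apply continuousOn_id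
  have hA := integrable_inner_smul_toSphere (μ := μ) hcont v
  have hB : Integrable
      (fun y : sphere (0 : E) 1 ↦ fderiv ℝ f y v - ⟪(y : E), v⟫ • fderiv ℝ f y y) μ.toSphere :=
    (integrable_fderiv_apply_toSphere hf v).sub (integrable_inner_smul_toSphere hcont' v)
  have hint : Integrable (fun x ↦ fderiv ℝ (radialExtension φ f) x v) μ :=
    ((hext.continuous_fderiv one_ne_zero).clm_apply
      continuous_const).integrable_of_hasCompactSupport
        ((hasCompactSupport_radialExtension hc f).fderiv_apply ℝ v)
  have hφ₁ : Integrable fun r ↦ r ^ (finrank ℝ E - 1) * (φ r + r * deriv φ r) := by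
    refine Continuous.integrable_of_hasCompactSupport ?_ (hc.add hc.deriv.mul_left).mul_left
    have := hφ.continuous_deriv le_rfl
    fun_prop
  have hφ₂ : Integrable fun r ↦ r ^ (finrank ℝ E - 1) * φ r :=
    Continuous.integrable_of_hasCompactSupport (by fun_prop) hc.mul_left
  rw [integral_eq_integral_Ioi_integral_toSphere hint, ← integral_smul_const,
    ← integral_smul_const, ← integral_add]
  · refine setIntegral_congr_fun measurableSet_Ioi fun r hr ↦ ?_
    have hsphere (y : sphere (0 : E) 1) := fderiv_radialExtension_smul
      (hφ.differentiable one_ne_zero r) ((hf y y.2).differentiableAt one_ne_zero) hr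
      (norm_eq_of_mem_sphere y) v
    simp only [hsphere, mul_smul]
    rw [integral_add (hA.fun_smul _) (hB.fun_smul _), integral_smul, integral_smul, smul_add]
  · exact hφ₁.integrableOn.integrable.smul_const _
  · exact hφ₂.integrableOn.integrable.smul_const _

theorem integral_fderiv_apply_toSphere [Nontrivial E] [CompleteSpace F] {f : E → F}
    (hf : ∀ y ∈ sphere 0 1, ContDiffAt ℝ 1 f y) (v : E) :
    ∫ y : sphere (0 : E) 1, fderiv ℝ f y v ∂μ.toSphere =
      ∫ y : sphere (0 : E) 1,
        ⟪(y : E), v⟫ • (fderiv ℝ f y y + ((finrank ℝ E : ℝ) - 1) • f y) ∂μ.toSphere := by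
  obtain ⟨φ, hφ, hc, hφ0, hne⟩ :=
    exists_contDiff_tsupport_subset_Ioi_integral_ne_zero (finrank ℝ E - 1)
  have hcont : ContinuousOn f (sphere 0 1) := fun y hy ↦ (hf y hy).continuousAt.continuousWithinAt
  have hcont' : ContinuousOn (fun y ↦ fderiv ℝ f y y) (sphere 0 1) :=
    (continuousOn_fderiv_of_contDiffAt hf).clm_apply continuousOn_id
  have hzero := integral_fderiv_apply_eq_zero (μ := μ) (contDiff_radialExtension hφ hφ0 hf)
    (hasCompactSupport_radialExtension hc f) v
  rw [integral_fderiv_radialExtension hφ hc hφ0 hf, integral_Ioi_pow_mul_deriv hφ hc,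
    Nat.cast_pred finrank_pos, integral_sub (integrable_fderiv_apply_toSphere hf v)
    (integrable_inner_smul_toSphere hcont' v), mul_comm, mul_smul, ← smul_add,
    smul_eq_zero_iff_right hne] at hzero
  simp only [smul_add, smul_comm _ ((finrank ℝ E : ℝ) - 1)]
  rw [integral_add (integrable_inner_smul_toSphere hcont' v)
    ((integrable_inner_smul_toSphere hcont v).fun_smul _), integral_smul, ← sub_eq_zero, ← hzero]
  module

theorem integral_fderiv_smul_apply_toSphere [Nontrivial E] [CompleteSpace F] {f : E → F} {r : ℝ}
    (hr : 0 < r) (hf : ∀ x ∈ sphere 0 r, ContDiffAt ℝ 1 f x) (v : E) :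
    r ^ (finrank ℝ E - 1) • ∫ y : sphere (0 : E) 1, fderiv ℝ f (r • y) v ∂μ.toSphere =
      ∫ y : sphere (0 : E) 1,
        ⟪(y : E), v⟫ • deriv (fun t : ℝ ↦ t ^ (finrank ℝ E - 1) • f (t • y)) r ∂μ.toSphere := by
  have hf' (y : E) (hy : y ∈ sphere 0 1) : ContDiffAt ℝ 1 f (r • y) := by
    refine hf _ (mem_sphere_zero_iff_norm.2 ?_)
    rw [norm_smul, mem_sphere_zero_iff_norm.1 hy, mul_one, Real.norm_of_nonneg hr.le]
  have hpow (m : ℕ) : (m : ℝ) * r ^ (m - 1) = r ^ m * r⁻¹ * m := by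
    rcases m with _ | m
    · simp
    · rw [Nat.add_sub_cancel, pow_succ, mul_inv_cancel_right₀ hr.ne', mul_comm]
  have hderiv (y : sphere (0 : E) 1) :
      deriv (fun t : ℝ ↦ t ^ (finrank ℝ E - 1) • f (t • (y : E))) r =
        (r ^ (finrank ℝ E - 1) * r⁻¹) •
          (r • fderiv ℝ f (r • y) y + ((finrank ℝ E : ℝ) - 1) • f (r • y)) := by
    rw [(hasDerivAt_pow_smul_comp_smul ((hf' y y.2).differentiableAt one_ne_zero) _).deriv, hpow,
      Nat.cast_pred finrank_pos, smul_add, smul_smul, smul_smul, inv_mul_cancel_right₀ hr.ne']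
  have hibp := integral_fderiv_apply_toSphere (μ := μ) (f := fun x ↦ f (r • x))
    (fun y hy ↦ (hf' y hy).comp y (contDiffAt_id.const_smul r)) v
  simp only [fderiv_comp_smul, smul_apply, integral_smul] at hibp
  simp only [hderiv, smul_comm (inner ℝ _ v) (r ^ (finrank ℝ E - 1) * r⁻¹)]
  rw [integral_smul, ← hibp, smul_smul, inv_mul_cancel_right₀ hr.ne']

theorem integrable_prod_toSphere_inner_smul_deriv {f : E → F} {R : ℝ}
    (hf : ∀ x ∈ closedBall 0 R, ContDiffAt ℝ 1 f x) (v : E) (m : ℕ) :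
    Integrable (fun z : ℝ × sphere (0 : E) 1 ↦
        ⟪(z.2 : E), v⟫ • deriv (fun t : ℝ ↦ t ^ m • f (t • (z.2 : E))) z.1)
      ((volume.restrict (Icc 0 R)).prod μ.toSphere) := by
  have hmaps : MapsTo (fun z : ℝ × sphere (0 : E) 1 ↦ (z.1, (z.2 : E))) (Icc 0 R ×ˢ univ)
      {z | z.1 • z.2 ∈ closedBall 0 R} := fun z hz ↦ by
    simpa [norm_smul, abs_of_nonneg hz.1.1] using hz.1.2
  have hderiv : ContinuousOn (fun z : ℝ × sphere (0 : E) 1 ↦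
      deriv (fun t : ℝ ↦ t ^ m • f (t • (z.2 : E))) z.1) (Icc 0 R ×ˢ univ) :=
    (continuousOn_deriv_pow_smul_comp_smul hf m).comp (by fun_prop) hmaps
  have hinner : Continuous fun z : ℝ × sphere (0 : E) 1 ↦ ⟪(z.2 : E), v⟫ := by fun_prop
  rw [← Measure.restrict_univ (μ := μ.toSphere), Measure.prod_restrict]
  exact (hinner.continuousOn.smul hderiv).integrableOn_compact (isCompact_Icc.prod isCompact_univ)

theorem integral_inner_smul_const_toSphere_eq_zero [Nontrivial E] [CompleteSpace F] (v : E)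
    (c : F) :
    ∫ y : sphere (0 : E) 1, ⟪(y : E), v⟫ • c ∂μ.toSphere = 0 := by
  simpa only [ContinuousLinearMap.smulRight_apply, coe_innerSL_apply, real_inner_comm _ v] using
    integral_clm_toSphere_eq_zero (μ := μ) ((innerSL ℝ v).smulRight c)

theorem intervalIntegral_integral_inner_smul_deriv_toSphere [Nontrivial E] [CompleteSpace F]
    {f : E → F} {R : ℝ} (hR : 0 ≤ R) (hf : ∀ x ∈ closedBall 0 R, ContDiffAt ℝ 1 f x) (v : E)
    (m : ℕ) :
    ∫ r in (0)..R, ∫ y : sphere (0 : E) 1,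
        ⟪(y : E), v⟫ • deriv (fun t : ℝ ↦ t ^ m • f (t • (y : E))) r ∂μ.toSphere =
      R ^ m • ∫ y : sphere (0 : E) 1, ⟪(y : E), v⟫ • f (R • y) ∂μ.toSphere := by
  have hprod := integrable_prod_toSphere_inner_smul_deriv (μ := μ) hf v m
  rw [← restrict_Ioc_eq_restrict_Icc, ← uIoc_of_le hR] at hprod
  have hmem {r : ℝ} (hr : r ∈ Icc 0 R) {y : E} (hy : ‖y‖ = 1) : r • y ∈ closedBall 0 R := by
    simpa [norm_smul, hy, abs_of_nonneg hr.1] using hr.2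
  have hray (y : sphere (0 : E) 1) :
      ∫ r in (0)..R, ⟪(y : E), v⟫ • deriv (fun t : ℝ ↦ t ^ m • f (t • (y : E))) r =
        ⟪(y : E), v⟫ • R ^ m • f (R • y) - ⟪(y : E), v⟫ • (0 : ℝ) ^ m • f 0 := by
    rw [intervalIntegral.integral_smul, integral_deriv_pow_smul_comp_smul, zero_smul, smul_sub]
    exact fun r hr ↦ hf _ (hmem (uIcc_of_le hR ▸ hr) (norm_eq_of_mem_sphere y))
  have hcont : ContinuousOn (fun y ↦ R ^ m • f (R • y)) (sphere 0 1) :=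
    continuousOn_const.smul fun y hy ↦ (ContinuousAt.comp (g := f)
      (hf _ (hmem ⟨hR, le_rfl⟩ (mem_sphere_zero_iff_norm.1 hy))).continuousAt
      (by fun_prop)).continuousWithinAt
  rw [intervalIntegral_integral_swap hprod]
  simp only [hray]
  -- As `0 ^ 0 = 1`, the term at the origin survives when `m = 0`; it then cancels by oddness.
  rw [integral_sub (integrable_inner_smul_toSphere hcont v)
    (integrable_inner_smul_toSphere (f := fun _ ↦ _) continuousOn_const v),
    integral_inner_smul_const_toSphere_eq_zero, sub_zero]
  simp only [smul_comm (inner ℝ _ v) (R ^ m), integral_smul]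

theorem setIntegral_closedBall_zero_fderiv_apply [Nontrivial E] [CompleteSpace F] {f : E → F}
    {R : ℝ} (hR : 0 ≤ R) (hf : ∀ x ∈ closedBall 0 R, ContDiffAt ℝ 1 f x) (v : E) :
    ∫ x in closedBall 0 R, fderiv ℝ f x v ∂μ =
      R ^ (finrank ℝ E - 1) • ∫ y : sphere (0 : E) 1, ⟪(y : E), v⟫ • f (R • y) ∂μ.toSphere := by
  have hint : IntegrableOn (fun x ↦ fderiv ℝ f x v) (closedBall 0 R) μ :=
    ((continuousOn_fderiv_of_contDiffAt hf).clm_apply continuousOn_const).integrableOn_compact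
      (isCompact_closedBall 0 R)
  rw [setIntegral_closedBall_eq_integral_toSphere hR hint,
    ← intervalIntegral_integral_inner_smul_deriv_toSphere hR hf v]
  refine intervalIntegral.integral_congr_uIoo fun r hr ↦ ?_
  rw [uIoo_of_le hR] at hr
  exact integral_fderiv_smul_apply_toSphere hr.1
    (fun x hx ↦ hf x (closedBall_subset_closedBall hr.2.le (sphere_subset_closedBall hx))) v

theorem setIntegral_closedBall_fderiv_apply [Nontrivial E] [CompleteSpace F] {f : E → F} {p : E}
    {R : ℝ} (hR : 0 ≤ R) (hf : ∀ x ∈ closedBall p R, ContDiffAt ℝ 1 f x) (v : E) :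
    ∫ x in closedBall p R, fderiv ℝ f x v ∂μ =
      R ^ (finrank ℝ E - 1) •
        ∫ y : sphere (0 : E) 1, ⟪(y : E), v⟫ • f (p + R • y) ∂μ.toSphere := by
  have hpre : (p + ·) ⁻¹' closedBall p R = closedBall 0 R := by simp
  have htranslate := (measurePreserving_add_left μ p).setIntegral_preimage_emb
    (measurableEmbedding_addLeft p) (fun x ↦ fderiv ℝ f x v) (closedBall p R)
  rw [← htranslate, hpre]
  simp only [← fderiv_comp_add_left]
  refine setIntegral_closedBall_zero_fderiv_apply hR (fun x hx ↦ ?_) v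
  exact (hf _ (hpre.ge hx)).comp x (contDiffAt_const.add contDiffAt_id)

theorem setIntegral_closedBall_sum_fderiv_apply [Nontrivial E] [CompleteSpace F] {ι : Type*}
    [Fintype ι] {f : ι → E → F} {p : E} {R : ℝ} (hR : 0 ≤ R)
    (hf : ∀ i, ∀ x ∈ closedBall p R, ContDiffAt ℝ 1 (f i) x) (v : ι → E) :
    ∫ x in closedBall p R, ∑ i, fderiv ℝ (f i) x (v i) ∂μ =
      R ^ (finrank ℝ E - 1) •
        ∫ y : sphere (0 : E) 1, ∑ i, ⟪(y : E), v i⟫ • f i (p + R • y) ∂μ.toSphere := by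
  have hball (i : ι) : IntegrableOn (fun x ↦ fderiv ℝ (f i) x (v i)) (closedBall p R) μ :=
    ((continuousOn_fderiv_of_contDiffAt (hf i)).clm_apply continuousOn_const).integrableOn_compact
      (isCompact_closedBall p R)
  have hsphere (i : ι) :
      Integrable (fun y : sphere (0 : E) 1 ↦ ⟪(y : E), v i⟫ • f i (p + R • y)) μ.toSphere := by
    refine integrable_inner_smul_toSphere (f := fun y ↦ f i (p + R • y)) (fun y hy ↦ ?_) (v i)
    refine (ContinuousAt.comp (g := f i) (hf i _ ?_).continuousAt
      (by fun_prop)).continuousWithinAt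
    simp [norm_smul, mem_sphere_zero_iff_norm.1 hy, abs_of_nonneg hR]
  rw [integral_finsetSum _ fun i _ ↦ hball i, integral_finsetSum _ fun i _ ↦ hsphere i,
    Finset.smul_sum]
  exact Finset.sum_congr rfl fun i _ ↦ setIntegral_closedBall_fderiv_apply hR (hf i) (v i)

theorem integral_inner_smul_fderiv_apply_toSphere [Nontrivial E] [CompleteSpace F] {f : E → F}
    (hf : ∀ y ∈ sphere 0 1, ContDiffAt ℝ 1 f y) (u v : E) :
    ∫ y : sphere (0 : E) 1, ⟪(y : E), u⟫ • fderiv ℝ f y v ∂μ.toSphere =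
      ∫ y : sphere (0 : E) 1, ((⟪(y : E), u⟫ * ⟪(y : E), v⟫) •
        (fderiv ℝ f y y + (finrank ℝ E : ℝ) • f y) - ⟪u, v⟫ • f y) ∂μ.toSphere := by
  have hcont : ContinuousOn f (sphere 0 1) := fun y hy ↦ (hf y hy).continuousAt.continuousWithinAt
  have hcont' : ContinuousOn (fun y ↦ fderiv ℝ f y y) (sphere 0 1) :=
    (continuousOn_fderiv_of_contDiffAt hf).clm_apply continuousOn_id
  have hint₁ : Integrable (fun y : sphere (0 : E) 1 ↦ ⟪(y : E), u⟫ • fderiv ℝ f y v) μ.toSphere :=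
    integrable_inner_smul_toSphere (f := fun y ↦ fderiv ℝ f y v)
      ((continuousOn_fderiv_of_contDiffAt hf).clm_apply continuousOn_const) u
  have hint₂ : Integrable (fun y : sphere (0 : E) 1 ↦ ⟪u, v⟫ • f y) μ.toSphere :=
    (integrable_toSphere_of_continuousOn hcont).fun_smul _
  have hint₃ : Integrable (fun y : sphere (0 : E) 1 ↦ (⟪(y : E), u⟫ * ⟪(y : E), v⟫) •
      (fderiv ℝ f y y + (finrank ℝ E : ℝ) • f y)) μ.toSphere :=
    integrable_toSphere_of_continuousOn (g := fun y ↦ (⟪y, u⟫ * ⟪y, v⟫) •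
      (fderiv ℝ f y y + (finrank ℝ E : ℝ) • f y)) (by fun_prop)
  have hprod : ∀ y ∈ sphere (0 : E) 1, ContDiffAt ℝ 1 (fun z ↦ ⟪z, u⟫ • f z) y :=
    fun y hy ↦ (contDiffAt_id.inner ℝ contDiffAt_const).smul (hf y hy)
  have hleibniz (y : sphere (0 : E) 1) (w : E) :
      fderiv ℝ (fun z ↦ ⟪z, u⟫ • f z) y w = ⟪(y : E), u⟫ • fderiv ℝ f y w + ⟪w, u⟫ • f y := by
    have hinner : HasFDerivAt (fun z : E ↦ ⟪z, u⟫) (innerSL ℝ u) (y : E) := by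
      simpa only [innerSL_apply_apply, real_inner_comm] using! (innerSL ℝ u).hasFDerivAt
    rw [(hinner.fun_smul ((hf y y.2).differentiableAt one_ne_zero).hasFDerivAt).fderiv]
    simp [real_inner_comm]
  have hibp := integral_fderiv_apply_toSphere (μ := μ) hprod v
  simp only [hleibniz, real_inner_comm u v] at hibp
  rw [integral_add hint₁ hint₂, ← eq_sub_iff_add_eq] at hibp
  rw [hibp, integral_sub hint₃ hint₂]
  congr! 3 with y
  rw [real_inner_comm]
  module

end SphereAndBall

section Tensor

open Metric Module Set

variable {ι : Type*} [Fintype ι] [DecidableEq ι]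

/-- The partial derivative `D_i f`, the counterpart of `pd` in arbitrary dimension. -/
noncomputable def partialDeriv (f : EuclideanSpace ℝ ι → ℝ) (i : ι) (x : EuclideanSpace ℝ ι) : ℝ :=
  fderiv ℝ f x (EuclideanSpace.single i 1)

theorem fderiv_apply_eq_sum_partialDeriv (f : EuclideanSpace ℝ ι → ℝ) (x v : EuclideanSpace ℝ ι) :
    fderiv ℝ f x v = ∑ i, v i * partialDeriv f i x := by
  conv_lhs => rw [← (EuclideanSpace.basisFun ι ℝ).sum_repr v]
  simp [partialDeriv]

theorem contDiffAt_partialDeriv {k : WithTop ℕ∞} {f : EuclideanSpace ℝ ι → ℝ}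
    {x : EuclideanSpace ℝ ι} (hf : ContDiffAt ℝ (k + 1) f x) (i : ι) :
    ContDiffAt ℝ k (partialDeriv f i) x :=
  (hf.fderiv_right_succ).clm_apply contDiffAt_const

theorem integral_mul_partialDeriv_toSphere [Nonempty ι] {f : EuclideanSpace ℝ ι → ℝ}
    (hf : ∀ y ∈ sphere 0 1, ContDiffAt ℝ 1 f y) (i j : ι) :
    ∫ y : sphere (0 : EuclideanSpace ℝ ι) 1, y.1 i * partialDeriv f j y ∂volume.toSphere =
      ∫ y : sphere (0 : EuclideanSpace ℝ ι) 1, (fderiv ℝ f y y * y.1 i * y.1 j +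
        Fintype.card ι * (f y * y.1 i * y.1 j) - if i = j then f y else 0) ∂volume.toSphere := by
  have h := integral_inner_smul_fderiv_apply_toSphere (μ := volume) hf
    (EuclideanSpace.single i 1) (EuclideanSpace.single j 1)
  simp only [EuclideanSpace.inner_single_right, finrank_euclideanSpace, conj_trivial, one_mul,
    smul_eq_mul, PiLp.single_apply, ite_mul, zero_mul] at h
  simp only [partialDeriv, h, eq_comm (a := j)]
  congr! 3 with y
  ring

theorem integral_sum_mul_partialDeriv_toSphere [Nonempty ι] {T : EuclideanSpace ℝ ι → ι → ι → ℝ}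
    (hT : ∀ i j, ∀ y ∈ sphere 0 1, ContDiffAt ℝ 1 (T · i j) y) :
    ∫ y : sphere (0 : EuclideanSpace ℝ ι) 1,
        ∑ i, ∑ j, y.1 i * partialDeriv (T · i j) j y ∂volume.toSphere =
      ∫ y : sphere (0 : EuclideanSpace ℝ ι) 1,
        (∑ i, ∑ j, fderiv ℝ (T · i j) y y * y.1 i * y.1 j +
          Fintype.card ι * ∑ i, ∑ j, T y i j * y.1 i * y.1 j - ∑ j, T y j j) ∂volume.toSphere := by
  have hintL (i j : ι) : Integrable (fun y : sphere (0 : EuclideanSpace ℝ ι) 1 ↦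
      y.1 i * partialDeriv (T · i j) j y) volume.toSphere :=
    integrable_toSphere_of_continuousOn (g := fun y ↦ y i * partialDeriv (T · i j) j y)
      (ContinuousOn.mul (by fun_prop)
        ((continuousOn_fderiv_of_contDiffAt (hT i j)).clm_apply continuousOn_const))
  let R (i j : ι) (y : EuclideanSpace ℝ ι) : ℝ := fderiv ℝ (T · i j) y y * y i * y j +
    Fintype.card ι * (T y i j * y i * y j) - if i = j then T y i j else 0
  have hintR (i j : ι) : Integrable (fun y : sphere (0 : EuclideanSpace ℝ ι) 1 ↦ R i j y)
      volume.toSphere := by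
    have hcont : ContinuousOn (T · i j) (sphere 0 1) :=
      fun y hy ↦ (hT i j y hy).continuousAt.continuousWithinAt
    have hderiv : ContinuousOn (fun y ↦ fderiv ℝ (T · i j) y y) (sphere 0 1) :=
      (continuousOn_fderiv_of_contDiffAt (hT i j)).clm_apply continuousOn_id
    refine integrable_toSphere_of_continuousOn (g := R i j) ?_
    dsimp only [R]
    split_ifs <;> fun_prop
  calc
    _ = ∑ i, ∑ j, ∫ y : sphere (0 : EuclideanSpace ℝ ι) 1,
          y.1 i * partialDeriv (T · i j) j y ∂volume.toSphere := by
      rw [integral_finsetSum _ fun i _ ↦ integrable_finsetSum _ fun j _ ↦ hintL i j]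
      exact Finset.sum_congr rfl fun i _ ↦ integral_finsetSum _ fun j _ ↦ hintL i j
    _ = ∑ i, ∑ j, ∫ y : sphere (0 : EuclideanSpace ℝ ι) 1, R i j y ∂volume.toSphere := by
      simp only [integral_mul_partialDeriv_toSphere (hT _ _), R]
    _ = ∫ y : sphere (0 : EuclideanSpace ℝ ι) 1, ∑ i, ∑ j, R i j y ∂volume.toSphere := by
      rw [integral_finsetSum _ fun i _ ↦ integrable_finsetSum _ fun j _ ↦ hintR i j]
      exact Finset.sum_congr rfl fun i _ ↦ (integral_finsetSum _ fun j _ ↦ hintR i j).symm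
    _ = _ := by
      simp only [R, Finset.sum_sub_distrib, Finset.sum_add_distrib, Finset.mul_sum,
        Finset.sum_ite_eq, Finset.mem_univ, if_true]

/-- The vector field `V_i = ∑_j (D_j T_ij - D_i T_jj)`, whose divergence is
`∑_{i,j} (D_i D_j T_ij - D_i D_i T_jj)`. -/
noncomputable def scalDivField (T : EuclideanSpace ℝ ι → ι → ι → ℝ) (i : ι)
    (x : EuclideanSpace ℝ ι) : ℝ :=
  ∑ j, (partialDeriv (T · i j) j x - partialDeriv (T · j j) i x)

theorem contDiffAt_scalDivField {k : WithTop ℕ∞} {T : EuclideanSpace ℝ ι → ι → ι → ℝ}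
    {x : EuclideanSpace ℝ ι} (hT : ∀ i j, ContDiffAt ℝ (k + 1) (T · i j) x) (i : ι) :
    ContDiffAt ℝ k (scalDivField T i) x :=
  ContDiffAt.sum fun j _ ↦
    (contDiffAt_partialDeriv (hT i j) j).sub (contDiffAt_partialDeriv (hT j j) i)

theorem sum_partialDeriv_scalDivField {T : EuclideanSpace ℝ ι → ι → ι → ℝ}
    {x : EuclideanSpace ℝ ι} (hT : ∀ i j, ContDiffAt ℝ 2 (T · i j) x) :
    ∑ i, partialDeriv (scalDivField T i) i x = ∑ i, ∑ j,
      (partialDeriv (partialDeriv (T · i j) j) i x -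
        partialDeriv (partialDeriv (T · j j) i) i x) := by
  have hdiff (i j k : ι) : DifferentiableAt ℝ (partialDeriv (T · i j) k) x :=
    (contDiffAt_partialDeriv (k := 1) (hT i j) k).differentiableAt one_ne_zero
  refine Finset.sum_congr rfl fun i _ ↦ ?_
  have hsum : HasFDerivAt (scalDivField T i) (∑ j, (fderiv ℝ (partialDeriv (T · i j) j) x -
      fderiv ℝ (partialDeriv (T · j j) i) x)) x :=
    .fun_sum fun j _ ↦ (hdiff i j j).hasFDerivAt.sub (hdiff j j i).hasFDerivAt
  simp only [partialDeriv, hsum.fderiv, sum_apply, sub_apply]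

theorem sum_mul_scalDivField (T : EuclideanSpace ℝ ι → ι → ι → ℝ) (x v : EuclideanSpace ℝ ι) :
    ∑ i, v i * scalDivField T i x =
      ∑ i, ∑ j, v i * partialDeriv (T · i j) j x - ∑ j, fderiv ℝ (T · j j) x v := by
  simp only [scalDivField, fderiv_apply_eq_sum_partialDeriv, Finset.mul_sum, mul_sub,
    Finset.sum_sub_distrib]
  rw [Finset.sum_comm (f := fun i j ↦ v i * partialDeriv (T · j j) i x)]

theorem integral_sum_mul_scalDivField_toSphere [Nonempty ι] {T : EuclideanSpace ℝ ι → ι → ι → ℝ}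
    (hT : ∀ i j, ∀ y ∈ sphere 0 1, ContDiffAt ℝ 1 (T · i j) y) :
    ∫ y : sphere (0 : EuclideanSpace ℝ ι) 1, ∑ i, y.1 i * scalDivField T i y ∂volume.toSphere =
      ∫ y : sphere (0 : EuclideanSpace ℝ ι) 1, ((Fintype.card ι - 1) * ∑ j, T y j j
          - Fintype.card ι * (∑ j, T y j j - ∑ i, ∑ j, T y i j * y.1 i * y.1 j)
          - (∑ j, fderiv ℝ (T · j j) y y
            - ∑ i, ∑ j, fderiv ℝ (T · i j) y y * y.1 i * y.1 j)) ∂volume.toSphere := by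
  have hcont (i j : ι) : ContinuousOn (T · i j) (sphere 0 1) :=
    fun y hy ↦ (hT i j y hy).continuousAt.continuousWithinAt
  have hfderiv (i j : ι) : ContinuousOn (fderiv ℝ (T · i j)) (sphere 0 1) :=
    continuousOn_fderiv_of_contDiffAt (hT i j)
  have hderiv (i j : ι) : ContinuousOn (fun y ↦ fderiv ℝ (T · i j) y y) (sphere 0 1) :=
    (hfderiv i j).clm_apply continuousOn_id
  have hpartial (i j k : ι) : ContinuousOn (partialDeriv (T · i j) k) (sphere 0 1) :=
    (hfderiv i j).clm_apply continuousOn_const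
  have hint₁ : Integrable (fun y : sphere (0 : EuclideanSpace ℝ ι) 1 ↦
      ∑ i, ∑ j, y.1 i * partialDeriv (T · i j) j y) volume.toSphere :=
    integrable_toSphere_of_continuousOn
      (g := fun y ↦ ∑ i, ∑ j, y i * partialDeriv (T · i j) j y) (by fun_prop)
  have hint₂ : Integrable (fun y : sphere (0 : EuclideanSpace ℝ ι) 1 ↦
      ∑ j, fderiv ℝ (T · j j) y y) volume.toSphere :=
    integrable_toSphere_of_continuousOn (g := fun y ↦ ∑ j, fderiv ℝ (T · j j) y y) (by fun_prop)
  have hint₃ : Integrable (fun y : sphere (0 : EuclideanSpace ℝ ι) 1 ↦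
      ∑ i, ∑ j, fderiv ℝ (T · i j) y y * y.1 i * y.1 j +
        Fintype.card ι * ∑ i, ∑ j, T y i j * y.1 i * y.1 j - ∑ j, T y j j) volume.toSphere :=
    integrable_toSphere_of_continuousOn (g := fun y ↦
      ∑ i, ∑ j, fderiv ℝ (T · i j) y y * y i * y j +
        Fintype.card ι * ∑ i, ∑ j, T y i j * y i * y j - ∑ j, T y j j) (by fun_prop)
  simp only [sum_mul_scalDivField]
  rw [integral_sub hint₁ hint₂, integral_sum_mul_partialDeriv_toSphere hT,
    ← integral_sub hint₃ hint₂]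
  congr! 2 with y
  ring

theorem divergence_identity_general [Nonempty ι] (p : EuclideanSpace ℝ ι)
    (T : EuclideanSpace ℝ ι → ι → ι → ℝ)
    (hT : ∀ i j, ∀ x ∈ closedBall p 1, ContDiffAt ℝ 2 (T · i j) x) :
    ∫ x in closedBall p 1, ∑ i, ∑ j,
        (partialDeriv (partialDeriv (T · i j) j) i x - partialDeriv (partialDeriv (T · j j) i) i x)
      = ∫ y : sphere (0 : EuclideanSpace ℝ ι) 1, ((Fintype.card ι - 1) * ∑ j, T (p + y) j j
          - Fintype.card ι * (∑ j, T (p + y) j j - ∑ i, ∑ j, T (p + y) i j * y.1 i * y.1 j)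
          - (∑ j, fderiv ℝ (T · j j) (p + y) y
            - ∑ i, ∑ j, fderiv ℝ (T · i j) (p + y) y * y.1 i * y.1 j)) ∂volume.toSphere := by
  have hfield (i : ι) (x) (hx : x ∈ closedBall p 1) : ContDiffAt ℝ 1 (scalDivField T i) x :=
    contDiffAt_scalDivField (fun i j ↦ hT i j x hx) i
  have htranslate (i j : ι) (y) (hy : y ∈ sphere 0 1) :
      ContDiffAt ℝ 1 (fun z ↦ T (p + z) i j) y := by
    refine ((hT i j (p + y) ?_).of_le one_le_two).comp y (contDiffAt_const.add contDiffAt_id)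
    simpa using (mem_sphere_zero_iff_norm.1 hy).le
  calc
    _ = ∫ x in closedBall p 1, ∑ i, partialDeriv (scalDivField T i) i x :=
      setIntegral_congr_fun measurableSet_closedBall fun x hx ↦
        (sum_partialDeriv_scalDivField fun i j ↦ hT i j x hx).symm
    _ = ∫ y : sphere (0 : EuclideanSpace ℝ ι) 1,
          ∑ i, y.1 i * scalDivField T i (p + y) ∂volume.toSphere := by
      simpa [partialDeriv, EuclideanSpace.inner_single_right] using
        setIntegral_closedBall_sum_fderiv_apply (μ := volume) zero_le_one hfield
          fun i ↦ EuclideanSpace.single i 1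
    _ = _ := by
      have hcomp (i j : ι) (y : EuclideanSpace ℝ ι) :
          fderiv ℝ (fun z ↦ T (p + z) i j) y = fderiv ℝ (T · i j) (p + y) :=
        fderiv_comp_add_left (f := (T · i j)) p
      simpa only [scalDivField, partialDeriv, hcomp] using
        integral_sum_mul_scalDivField_toSphere htranslate

end Tensor

theorem divergence_identity (p : E3) (U : Set E3) (hU : IsOpen U)
    (hB : Metric.closedBall p 1 ⊆ U)
    (T : E3 → Fin 3 → Fin 3 → ℝ)
    (hsmooth : ContDiffOn ℝ (⊤ : ℕ∞) (fun x => T x) U)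
    (hsym : ∀ x i j, T x i j = T x j i) :
    ∫ x in Metric.closedBall p 1, scalDiv T x
      = ∫ y : Metric.sphere (0 : E3) 1,
          (2 * trT T (p + (y : E3))
            - 3 * (trT T (p + (y : E3)) - quadT T (p + (y : E3)) (y : E3))
            - ((∑ j, fderiv ℝ (fun z => T z j j) (p + (y : E3)) (y : E3))
               - ∑ i, ∑ j,
                   fderiv ℝ (fun z => T z i j) (p + (y : E3)) (y : E3)
                     * (y : E3) i * (y : E3) j)) ∂sphereMeasure := by
  have hT (i j : Fin 3) (x : E3) (hx : x ∈ Metric.closedBall p 1) :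
      ContDiffAt ℝ 2 (fun z => T z i j) x :=
    contDiffAt_pi.1 (contDiffAt_pi.1 ((hsmooth.contDiffAt (hU.mem_nhds (hB hx))).of_le
      (WithTop.coe_le_coe.2 le_top)) i) j
  have hdim : (3 : ℝ) - 1 = 2 := by norm_num
  simpa only [Fintype.card_fin, Nat.cast_ofNat, hdim] using! divergence_identity_general p T hT
end

section
/- Let T be a smooth symmetric 2-tensor field on ℝ^3 \ {0} with components homogeneous of degree -2, and fix ξ ∈ ℝ^3 with |ξ| > 1. Define G(s) = ∫_{∂B_1(sξ)} tr_S(T) dA - 2 ∫_{B_1(sξ)} tr_{ℝ^3}(T) dV and K(s) = ∫_{B_1(sξ)} ∑_{i,j} (D_i D_j T_{ij} - D_i D_i T_{jj}) dV for s ≥ 1. Then s G'(s) = G(s) + K(s) for all s ≥ 1. -/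
open MeasureTheory Real

/-!
Write `U_s(y) = T(sξ + y)`, so that `G(s)` is a linear functional `𝒢(U_s)` of the tensor field `U_s`
on the fixed unit ball `B`. Euler's identity for `T` reads `s ∂_s U_s = -2 U_s - y·∇U_s`, and
everything rests on the value `𝒢(y·∇U) = -3 𝒢(U) - ∫_B ∑ (D_i D_j U_ij - D_i D_i U_jj)`.

On `∂B`, `tr_S(y·∇U)` is the tangential divergence of the contraction `U(y, ·)`, minus the outward
component of the vector field `∑_j (D_j U_ij - D_i U_jj)`, minus `tr_S(U)`. The second term
integrates to the curvature term by the divergence theorem on `B`, and the first to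
`2 ∫_{∂B} U(ν, ν)` by the divergence theorem on the sphere. The theorem on the sphere is the
infinitesimal form of the rotation invariance of surface measure; applied to all concentric spheres
and integrated in the radius, it also gives the theorem on `B`.
-/

section PolarCoordinates

open Metric Set Module

variable {E F : Type*} [NormedAddCommGroup E] [NormedSpace ℝ E] [FiniteDimensional ℝ E]
  [Nontrivial E] [MeasurableSpace E] [BorelSpace E] (μ : Measure E) [μ.IsAddHaarMeasure]
  [NormedAddCommGroup F] [NormedSpace ℝ F]

theorem integral_eq_integral_Ioi_toSphere {f : E → F} (hf : Integrable f μ) :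
    ∫ x, f x ∂μ = ∫ r in Ioi (0 : ℝ), r ^ (finrank ℝ E - 1) •
      ∫ y : sphere (0 : E) 1, f (r • (y : E)) ∂μ.toSphere := by
  have polar := μ.measurePreserving_homeomorphUnitSphereProd
  have embedding := (homeomorphUnitSphereProd E).measurableEmbedding
  set g : sphere (0 : E) 1 × Ioi (0 : ℝ) → F := fun p => f (p.2.1 • (p.1 : E)) with hg
  have g_polar : g ∘ homeomorphUnitSphereProd E = f ∘ ((↑) : ({0}ᶜ : Set E) → E) := by
    ext x
    simp [hg, smul_smul, norm_ne_zero_iff.2 x.2]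
  have g_integrable : Integrable g (μ.toSphere.prod (.volumeIoiPow (finrank ℝ E - 1))) := by
    rw [← polar.integrable_comp_emb embedding, g_polar,
      ← integrableOn_iff_comap_subtypeVal (measurableSet_singleton _).compl]
    exact hf.integrableOn
  calc ∫ x, f x ∂μ
      = ∫ x : ({0}ᶜ : Set E), f x ∂(μ.comap (↑)) := by
        rw [integral_subtype_comap (measurableSet_singleton _).compl f, restrict_compl_singleton]
    _ = ∫ p, g p ∂(μ.toSphere.prod (.volumeIoiPow (finrank ℝ E - 1))) := by
        rw [← polar.integral_comp embedding]
        exact integral_congr_ae (.of_forall fun x => (congrFun g_polar x).symm)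
    _ = ∫ r, ∫ y, g (y, r) ∂μ.toSphere ∂(.volumeIoiPow (finrank ℝ E - 1)) :=
        integral_prod_symm _ g_integrable
    _ = _ := by
        simp only [Measure.volumeIoiPow, ENNReal.ofReal]
        rw [integral_withDensity_eq_integral_smul
            (measurable_subtype_coe.pow_const _).real_toNNReal,
          integral_subtype_comap measurableSet_Ioi fun a => Real.toNNReal (a ^ (finrank ℝ E - 1)) •
            ∫ y : sphere (0 : E) 1, f (a • (y : E)) ∂μ.toSphere]
        refine setIntegral_congr_fun measurableSet_Ioi fun r hr => ?_
        simp only [NNReal.smul_def, Real.coe_toNNReal _ (pow_nonneg (le_of_lt hr) _)]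

theorem setIntegral_closedBall_eq_intervalIntegral_toSphere {f : E → F} {R : ℝ} (hR : 0 ≤ R)
    (hf : IntegrableOn f (closedBall 0 R) μ) :
    ∫ x in closedBall 0 R, f x ∂μ = ∫ r in 0..R, r ^ (finrank ℝ E - 1) •
      ∫ y : sphere (0 : E) 1, f (r • (y : E)) ∂μ.toSphere := by
  rw [← integral_indicator measurableSet_closedBall,
    integral_eq_integral_Ioi_toSphere μ (hf.integrable_indicator measurableSet_closedBall),
    intervalIntegral.integral_of_le hR, ← Ioi_inter_Iic, ← setIntegral_indicator measurableSet_Iic]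
  refine setIntegral_congr_fun measurableSet_Ioi fun r (hr : 0 < r) => ?_
  have mem_iff (y : sphere (0 : E) 1) : r • (y : E) ∈ closedBall 0 R ↔ r ≤ R := by
    simp [norm_smul, abs_of_pos hr]
  by_cases hrR : r ≤ R <;> simp [indicator, mem_iff, hrR]

end PolarCoordinates

section ParametricIntegral

open Metric

variable {Y F : Type*} [TopologicalSpace Y] [MeasurableSpace Y] [OpensMeasurableSpace Y]
  {μ : Measure Y} [IsFiniteMeasureOnCompacts μ] [NormedAddCommGroup F] [NormedSpace ℝ F]
  [SecondCountableTopologyEither Y F]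

theorem hasDerivAt_setIntegral_of_continuous {f f' : ℝ → Y → F} {K : Set Y} (hK : IsCompact K)
    (hKm : MeasurableSet K) (hf : Continuous f.uncurry) (hf' : Continuous f'.uncurry)
    (hderiv : ∀ s y, HasDerivAt (f · y) (f' s y) s) (s : ℝ) :
    HasDerivAt (fun t => ∫ y in K, f t y ∂μ) (∫ y in K, f' s y ∂μ) s := by
  have f_cont (t : ℝ) : Continuous (f t) := hf.comp (.prodMk_right t)
  have f'_cont (t : ℝ) : Continuous (f' t) := hf'.comp (.prodMk_right t)
  have compact : IsCompact (closedBall s 1 ×ˢ K) := (isCompact_closedBall _ _).prod hK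
  obtain ⟨C, hC⟩ := compact.exists_bound_of_continuousOn hf.continuousOn
  obtain ⟨C', hC'⟩ := compact.exists_bound_of_continuousOn hf'.continuousOn
  have integrable_const (c : ℝ) : IntegrableOn (fun _ => c) K μ :=
    integrableOn_const hK.measure_ne_top
  refine (hasDerivAt_integral_of_dominated_loc_of_deriv_le (bound := fun _ => C')
    (closedBall_mem_nhds s one_pos) (.of_forall fun t => (f_cont t).aestronglyMeasurable)
    ?_ (f'_cont s).aestronglyMeasurable ?_ (integrable_const C')
    (.of_forall fun y t _ => hderiv t y)).2
  · refine (integrable_const C).mono' (f_cont s).aestronglyMeasurable ?_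
    filter_upwards [ae_restrict_mem hKm] with y hy
    exact hC (s, y) ⟨mem_closedBall_self zero_le_one, hy⟩
  · filter_upwards [ae_restrict_mem hKm] with y hy t ht
    exact hC' (t, y) ⟨ht, hy⟩

end ParametricIntegral

section SphereRotations

open Metric Set
open scoped Pointwise

variable {E F : Type*} [NormedAddCommGroup E] [InnerProductSpace ℝ E] [FiniteDimensional ℝ E]
  [MeasurableSpace E] [BorelSpace E] [NormedAddCommGroup F] [NormedSpace ℝ F]

theorem integral_sphere_comp_linearIsometryEquiv (L : E ≃ₗᵢ[ℝ] E) {f : E → F}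
    (hf : Continuous f) :
    ∫ y : sphere (0 : E) 1, f (L y) ∂(volume : Measure E).toSphere =
      ∫ y : sphere (0 : E) 1, f y ∂(volume : Measure E).toSphere := by
  let φ : sphere (0 : E) 1 → sphere (0 : E) 1 := fun y => ⟨L y, by simp⟩
  have φ_cont : Continuous φ := by fun_prop
  have φ_map : ((volume : Measure E).toSphere).map φ = (volume : Measure E).toSphere := by
    ext s hs
    have preimage_sector : Ioo (0 : ℝ) 1 • (((↑) : sphere (0 : E) 1 → E) '' (φ ⁻¹' s)) =
        L ⁻¹' (Ioo (0 : ℝ) 1 • ((↑) '' s)) := by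
      ext x
      simp only [Set.mem_smul, mem_preimage]
      constructor
      · rintro ⟨r, hr, _, ⟨y, hy, rfl⟩, rfl⟩
        exact ⟨r, hr, _, ⟨φ y, hy, rfl⟩, (L.map_smul r y).symm⟩
      · rintro ⟨r, hr, _, ⟨y, hy, rfl⟩, hrx⟩
        refine ⟨r, hr, _, ⟨⟨L.symm y, by simp⟩, by simpa [φ] using hy, rfl⟩, ?_⟩
        rw [← L.symm_apply_apply x, ← hrx]
        exact (L.symm.map_smul r y).symm
    rw [Measure.map_apply φ_cont.measurable hs, Measure.toSphere_apply' _ hs,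
      Measure.toSphere_apply' _ (φ_cont.measurable hs), preimage_sector,
      L.measurePreserving.measure_preimage_emb L.toHomeomorph.measurableEmbedding]
  conv_rhs => rw [← φ_map]
  exact (integral_map φ_cont.aemeasurable
    (hf.comp continuous_subtype_val).aestronglyMeasurable).symm

theorem integral_sphere_fderiv_skewAdjoint {f : E → F} (hf : ContDiff ℝ 1 f) {A : E →L[ℝ] E}
    (hA : A ∈ skewAdjoint (E →L[ℝ] E)) :
    ∫ y : sphere (0 : E) 1, fderiv ℝ f y (A y) ∂(volume : Measure E).toSphere = 0 := by
  let : NormedAlgebra ℚ (E →L[ℝ] E) := .restrictScalars ℚ ℝ _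
  let R : ℝ → E →L[ℝ] E := fun θ => NormedSpace.exp (θ • A)
  have R_deriv (θ : ℝ) (y : E) : HasDerivAt (R · y) (A (R θ y)) θ :=
    (hasDerivAt_exp_smul_const' A θ).clm_apply (hasDerivAt_const θ y) |>.congr_deriv (by simp [R])
  have : Continuous R := NormedSpace.exp_continuous.comp (by fun_prop)
  have R_invariant (θ : ℝ) : ∫ y : sphere (0 : E) 1, f (R θ y) ∂(volume : Measure E).toSphere =
      ∫ y : sphere (0 : E) 1, f y ∂(volume : Measure E).toSphere :=
    integral_sphere_comp_linearIsometryEquiv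
      (Unitary.linearIsometryEquiv ⟨R θ, NormedSpace.exp_mem_unitary_of_mem_skewAdjoint
        (skewAdjoint.smul_mem θ hA)⟩) hf.continuous
  have integral_deriv := hasDerivAt_setIntegral_of_continuous (μ := (volume : Measure E).toSphere)
    (f := fun θ y => f (R θ y)) (f' := fun θ y => fderiv ℝ f (R θ y) (A (R θ y)))
    isCompact_univ .univ
    (hf.continuous.comp (by fun_prop)) (by have := hf.continuous_fderiv one_ne_zero; fun_prop)
    (fun θ y => ((hf.differentiable one_ne_zero _).hasFDerivAt.comp_hasDerivAt θ (R_deriv θ y))) 0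
  simp only [setIntegral_univ, R_invariant] at integral_deriv
  simpa [R] using integral_deriv.unique (hasDerivAt_const 0 _)

end SphereRotations

section Divergence

open InnerProductSpace Module

variable {E : Type*} [NormedAddCommGroup E] [InnerProductSpace ℝ E]

/-- The divergence of a vector field, as the trace of its derivative. -/
noncomputable def divergence (X : E → E) (x : E) : ℝ :=
  LinearMap.trace ℝ E (fderiv ℝ X x).toLinearMap

theorem divergence_eq_sum_inner {ι : Type*} [Fintype ι] (b : OrthonormalBasis ι ℝ E) (X : E → E)
    (x : E) : divergence X x = ∑ i, ⟪b i, fderiv ℝ X x (b i)⟫_ℝ :=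
  LinearMap.trace_eq_sum_inner _ b

theorem divergence_comp_smul {X : E → E} (c : ℝ) (x : E) :
    divergence (fun y => X (c • y)) x = c * divergence X (c • x) := by
  simp [divergence, fderiv_comp_smul]

/-- The generator `y ↦ ⟪u, y⟫ v - ⟪v, y⟫ u` of the rotations in the plane of `u` and `v`. -/
noncomputable def rotationGenerator (u v : E) : E →L[ℝ] E := rankOne ℝ v u - rankOne ℝ u v

theorem rotationGenerator_apply (u v y : E) :
    rotationGenerator u v y = ⟪u, y⟫_ℝ • v - ⟪v, y⟫_ℝ • u := by
  simp [rotationGenerator]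

theorem sum_inner_map_rotationGenerator {ι : Type*} [Fintype ι] (b : OrthonormalBasis ι ℝ E)
    (A : E →L[ℝ] E) (y : E) :
    ∑ i, ∑ j, ⟪b i, y⟫_ℝ * ⟪b j, A (rotationGenerator (b i) (b j) y)⟫_ℝ =
      ‖y‖ ^ 2 * LinearMap.trace ℝ E A.toLinearMap - ⟪A y, y⟫_ℝ := by
  have parseval v : ∑ j, ⟪b j, y⟫_ℝ * ⟪b j, v⟫_ℝ = ⟪v, y⟫_ℝ := by
    simpa only [real_inner_comm] using b.sum_inner_mul_inner y v
  have trace_eq : ∑ j, ⟪b j, A (b j)⟫_ℝ = LinearMap.trace ℝ E A.toLinearMap :=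
    (LinearMap.trace_eq_sum_inner A.toLinearMap b).symm
  have sum_snd i : ∑ j, ⟪b i, y⟫_ℝ * ⟪b j, A (rotationGenerator (b i) (b j) y)⟫_ℝ =
      ⟪b i, y⟫_ℝ * ⟪b i, y⟫_ℝ * LinearMap.trace ℝ E A.toLinearMap -
        ⟪⟪b i, y⟫_ℝ • A (b i), y⟫_ℝ := by
    simp only [rotationGenerator_apply, map_sub, map_smul, inner_sub_right, inner_smul_right,
      ← Finset.mul_sum, Finset.sum_sub_distrib, parseval, trace_eq, real_inner_smul_left]
    ring
  rw [Finset.sum_congr rfl fun i _ => sum_snd i, Finset.sum_sub_distrib, ← Finset.sum_mul, parseval,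
    ← sum_inner, real_inner_self_eq_norm_sq]
  simp only [← map_smul, ← map_sum, b.sum_repr']

theorem sum_inner_rotationGenerator {ι : Type*} [Fintype ι] (b : OrthonormalBasis ι ℝ E)
    (v y : E) :
    ∑ i, ∑ j, ⟪b i, rotationGenerator (b i) (b j) y⟫_ℝ * ⟪b j, v⟫_ℝ =
      -((finrank ℝ E - 1) * ⟪v, y⟫_ℝ) := by
  classical
  have parseval : ∑ j, ⟪b j, y⟫_ℝ * ⟪b j, v⟫_ℝ = ⟪v, y⟫_ℝ := by
    simpa only [real_inner_comm] using b.sum_inner_mul_inner y v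
  have inner_rotation i j : ⟪b i, rotationGenerator (b i) (b j) y⟫_ℝ =
      (if i = j then ⟪b i, y⟫_ℝ else 0) - ⟪b j, y⟫_ℝ := by
    simp [rotationGenerator_apply, inner_sub_right, inner_smul_right,
      orthonormal_iff_ite.1 b.orthonormal]
  simp only [inner_rotation, sub_mul, ite_mul, zero_mul, Finset.sum_sub_distrib, parseval,
    Finset.sum_ite_eq, Finset.mem_univ, if_true, Finset.sum_const, Finset.card_univ,
    finrank_eq_card_basis b.toBasis, nsmul_eq_mul]
  ring

/- Each summand integrates to zero over the sphere, which turns this identity into the divergence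
theorem there. -/
theorem sum_fderiv_rotationGenerator {ι : Type*} [Fintype ι] (b : OrthonormalBasis ι ℝ E)
    {X : E → E} {y : E} (hX : DifferentiableAt ℝ X y) :
    ∑ i, ∑ j, fderiv ℝ (fun z => ⟪b i, z⟫_ℝ * ⟪b j, X z⟫_ℝ) y (rotationGenerator (b i) (b j) y) =
      ‖y‖ ^ 2 * divergence X y - ⟪fderiv ℝ X y y, y⟫_ℝ - (finrank ℝ E - 1) * ⟪X y, y⟫_ℝ := by
  have fderiv_apply i j v : fderiv ℝ (fun z => ⟪b i, z⟫_ℝ * ⟪b j, X z⟫_ℝ) y v =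
      ⟪b i, y⟫_ℝ * ⟪b j, fderiv ℝ X y v⟫_ℝ + ⟪b i, v⟫_ℝ * ⟪b j, X y⟫_ℝ := by
    have := HasFDerivAt.fun_mul (innerSL ℝ (b i)).hasFDerivAt
      ((innerSL ℝ (b j)).hasFDerivAt.comp y hX.hasFDerivAt)
    simpa [mul_comm] using congr($(this.fderiv) v)
  simp only [fderiv_apply, Finset.sum_add_distrib, sum_inner_map_rotationGenerator,
    sum_inner_rotationGenerator, divergence, sub_eq_add_neg]

variable [FiniteDimensional ℝ E]

theorem divergence_smul_id {f : E → ℝ} {x : E} (hf : DifferentiableAt ℝ f x) :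
    divergence (fun y => f y • y) x = fderiv ℝ f x x + finrank ℝ E * f x := by
  simp only [divergence]
  rw [fderiv_fun_smul hf differentiableAt_fun_id]
  simp [add_comm, mul_comm]

theorem continuous_divergence {X : E → E} (hX : ContDiff ℝ 1 X) : Continuous (divergence X) := by
  have := hX.continuous_fderiv one_ne_zero
  simp only [funext (divergence_eq_sum_inner (stdOrthonormalBasis ℝ E) X)]
  fun_prop

theorem rotationGenerator_mem_skewAdjoint (u v : E) :
    rotationGenerator u v ∈ skewAdjoint (E →L[ℝ] E) := by
  simp [rotationGenerator, skewAdjoint.mem_iff, ContinuousLinearMap.star_eq_adjoint]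

end Divergence

section DivergenceTheorem

open Metric InnerProductSpace Module

variable {E F : Type*} [NormedAddCommGroup E] [InnerProductSpace ℝ E] [FiniteDimensional ℝ E]
  [MeasurableSpace E] [BorelSpace E] [NormedAddCommGroup F]

theorem integrable_toSphere_of_continuous {f : E → F} (hf : Continuous f) :
    Integrable (fun y : sphere (0 : E) 1 => f y) (volume : Measure E).toSphere :=
  (hf.comp continuous_subtype_val).integrable_of_hasCompactSupport
    (HasCompactSupport.of_compactSpace _)

theorem continuous_integral_sphere_smul [NormedSpace ℝ F] {f : E → F} (hf : Continuous f) :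
    Continuous fun r : ℝ =>
      ∫ y : sphere (0 : E) 1, f (r • (y : E)) ∂(volume : Measure E).toSphere := by
  simpa only [setIntegral_univ] using
    continuous_parametric_integral_of_continuous
      (f := fun (r : ℝ) (y : sphere (0 : E) 1) => f (r • (y : E))) (by fun_prop) isCompact_univ

theorem integral_sphere_tangentialDivergence {X : E → E} (hX : ContDiff ℝ 1 X) :
    ∫ y : sphere (0 : E) 1, (divergence X y - ⟪fderiv ℝ X y y, (y : E)⟫_ℝ)
        ∂(volume : Measure E).toSphere =
      (finrank ℝ E - 1) * ∫ y : sphere (0 : E) 1, ⟪X y, y⟫_ℝ ∂(volume : Measure E).toSphere := by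
  let b := stdOrthonormalBasis ℝ E
  let f i j : E → ℝ := fun y => ⟪b i, y⟫_ℝ * ⟪b j, X y⟫_ℝ
  have f_contDiff i j : ContDiff ℝ 1 (f i j) :=
    (contDiff_const.inner ℝ contDiff_id).mul (contDiff_const.inner ℝ hX)
  have f_integrable i j : Integrable (fun y : sphere (0 : E) 1 =>
      fderiv ℝ (f i j) y (rotationGenerator (b i) (b j) y)) (volume : Measure E).toSphere :=
    integrable_toSphere_of_continuous
      (((f_contDiff i j).continuous_fderiv one_ne_zero).clm_apply
        (ContinuousLinearMap.continuous _))
  have integral_sum : ∫ y : sphere (0 : E) 1, ∑ i, ∑ j,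
      fderiv ℝ (f i j) y (rotationGenerator (b i) (b j) y) ∂(volume : Measure E).toSphere = 0 := by
    rw [integral_finsetSum _ fun i _ => integrable_finsetSum _ fun j _ => f_integrable i j]
    simp only [integral_finsetSum _ fun j _ => f_integrable _ j, integral_sphere_fderiv_skewAdjoint
      (f_contDiff _ _) (rotationGenerator_mem_skewAdjoint _ _), Finset.sum_const_zero]
  have := hX.continuous
  have := hX.continuous_fderiv one_ne_zero
  have := continuous_divergence hX
  simp only [f, sum_fderiv_rotationGenerator b (hX.differentiable one_ne_zero _),
    norm_eq_of_mem_sphere, one_pow, one_mul] at integral_sum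
  rwa [integral_sub, integral_const_mul, sub_eq_zero] at integral_sum
  · exact integrable_toSphere_of_continuous (f := fun y => divergence X y - ⟪fderiv ℝ X y y, y⟫_ℝ)
      (by fun_prop)
  · exact integrable_toSphere_of_continuous (f := fun y => (finrank ℝ E - 1) * ⟪X y, y⟫_ℝ)
      (by fun_prop)

theorem integral_sphere_inner_const (v : E) :
    ∫ y : sphere (0 : E) 1, ⟪v, (y : E)⟫_ℝ ∂(volume : Measure E).toSphere = 0 := by
  have := integral_sphere_comp_linearIsometryEquiv (LinearIsometryEquiv.neg ℝ)
    (f := fun y : E => ⟪v, y⟫_ℝ) (by fun_prop)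
  simp only [LinearIsometryEquiv.coe_neg, inner_neg_right, integral_neg] at this
  linarith

theorem hasDerivAt_integral_sphere_flux {X : E → E} (hX : ContDiff ℝ 1 X) (r : ℝ) :
    HasDerivAt (fun r : ℝ =>
        ∫ y : sphere (0 : E) 1, ⟪X (r • (y : E)), y⟫_ℝ ∂(volume : Measure E).toSphere)
      (∫ y : sphere (0 : E) 1, ⟪fderiv ℝ X (r • (y : E)) y, y⟫_ℝ
        ∂(volume : Measure E).toSphere) r := by
  have := hX.continuous
  have := hX.continuous_fderiv one_ne_zero
  have deriv (r : ℝ) (y : sphere (0 : E) 1) :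
      HasDerivAt (fun r : ℝ => ⟪X (r • (y : E)), (y : E)⟫_ℝ)
        ⟪fderiv ℝ X (r • (y : E)) y, (y : E)⟫_ℝ r := by
    have := (hX.differentiable one_ne_zero _).hasFDerivAt.comp_hasDerivAt r
      ((hasDerivAt_id r).smul_const (y : E))
    simpa using this.inner ℝ (hasDerivAt_const r (y : E))
  simpa using hasDerivAt_setIntegral_of_continuous (μ := (volume : Measure E).toSphere)
    isCompact_univ .univ (by fun_prop) (by fun_prop) deriv r

theorem hasDerivAt_pow_mul_integral_sphere_flux [Nontrivial E] {X : E → E} (hX : ContDiff ℝ 1 X)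
    {r : ℝ} (hr : r ≠ 0) :
    HasDerivAt (fun r : ℝ => r ^ (finrank ℝ E - 1) *
        ∫ y : sphere (0 : E) 1, ⟪X (r • (y : E)), y⟫_ℝ ∂(volume : Measure E).toSphere)
      (r ^ (finrank ℝ E - 1) *
        ∫ y : sphere (0 : E) 1, divergence X (r • (y : E)) ∂(volume : Measure E).toSphere) r := by
  obtain ⟨n, hn⟩ := Nat.exists_eq_succ_of_ne_zero (finrank_pos (R := ℝ) (M := E)).ne'
  have := hX.continuous_fderiv one_ne_zero
  have div_cont := continuous_divergence hX
  have rescaled := integral_sphere_tangentialDivergence (X := fun y => X (r • y)) (by fun_prop)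
  simp only [divergence_comp_smul, fderiv_comp_smul, _root_.smul_apply,
    real_inner_smul_left, ← mul_sub, integral_const_mul, hn, Nat.cast_succ, add_sub_cancel_right]
    at rescaled
  rw [integral_sub
    (integrable_toSphere_of_continuous (f := fun y => divergence X (r • y)) (by fun_prop))
    (integrable_toSphere_of_continuous (f := fun y => ⟪fderiv ℝ X (r • y) y, y⟫_ℝ) (by fun_prop))]
    at rescaled
  refine ((hasDerivAt_pow _ r).mul (hasDerivAt_integral_sphere_flux hX r)).congr_deriv ?_
  rw [hn, Nat.succ_sub_one]
  cases n with
  | zero =>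
    rw [Nat.cast_zero, zero_mul, mul_eq_zero, sub_eq_zero] at rescaled
    simp [rescaled.resolve_left hr]
  | succ m =>
    rw [Nat.add_sub_cancel]
    linear_combination -r ^ m * rescaled

theorem integral_closedBall_divergence [Nontrivial E] {X : E → E} (hX : ContDiff ℝ 1 X) :
    ∫ x in closedBall 0 1, divergence X x =
      ∫ y : sphere (0 : E) 1, ⟪X y, y⟫_ℝ ∂(volume : Measure E).toSphere := by
  have div_cont := continuous_divergence hX
  rw [setIntegral_closedBall_eq_intervalIntegral_toSphere volume zero_le_one
    (div_cont.continuousOn.integrableOn_compact (isCompact_closedBall 0 1))]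
  simp only [smul_eq_mul]
  rw [intervalIntegral.integral_eq_sub_of_hasDerivAt_of_le zero_le_one
    (f := fun r : ℝ => r ^ (finrank ℝ E - 1) *
        ∫ y : sphere (0 : E) 1, ⟪X (r • (y : E)), y⟫_ℝ ∂(volume : Measure E).toSphere)]
  · simp [integral_sphere_inner_const]
  · exact fun r _ => ContinuousAt.continuousWithinAt
      ((continuous_pow _).continuousAt.mul (hasDerivAt_integral_sphere_flux hX r).continuousAt)
  · exact fun r hr => hasDerivAt_pow_mul_integral_sphere_flux hX hr.1.ne'
  · exact ((continuous_pow _).mul (continuous_integral_sphere_smul div_cont)).intervalIntegrable _ _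

theorem integral_closedBall_fderiv_self [Nontrivial E] {f : E → ℝ} (hf : ContDiff ℝ 1 f) :
    ∫ x in closedBall 0 1, fderiv ℝ f x x =
      ∫ y : sphere (0 : E) 1, f y ∂(volume : Measure E).toSphere -
        finrank ℝ E * ∫ x in closedBall 0 1, f x := by
  have integrable {g : E → ℝ} (hg : Continuous g) : IntegrableOn g (closedBall 0 1) :=
    hg.continuousOn.integrableOn_compact (isCompact_closedBall 0 1)
  have := hf.continuous
  have := hf.continuous_fderiv one_ne_zero
  have flux := integral_closedBall_divergence (X := fun y => f y • y) (hf.smul contDiff_id)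
  simp only [divergence_smul_id (hf.differentiable one_ne_zero _), real_inner_smul_left] at flux
  rw [integral_add (integrable (by fun_prop)) (integrable (by fun_prop)), integral_const_mul]
    at flux
  rw [eq_sub_iff_add_eq]
  simpa using flux

end DivergenceTheorem

section HomogeneousFunctions

open Filter Topology

variable {E F : Type*} [NormedAddCommGroup E] [NormedSpace ℝ E] [NormedAddCommGroup F]
  [NormedSpace ℝ F]

theorem fderiv_apply_self_of_homogeneous {f : E → F} {x : E} {k : ℤ}
    (hf : DifferentiableAt ℝ f x) (hhom : ∀ c : ℝ, 0 < c → f (c • x) = c ^ k • f x) :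
    fderiv ℝ f x x = (k : ℝ) • f x := by
  have deriv_along_ray : HasDerivAt (fun c : ℝ => f (c • x)) (fderiv ℝ f x x) 1 := by
    have hf' : HasFDerivAt f (fderiv ℝ f x) ((1 : ℝ) • x) := by simpa using hf.hasFDerivAt
    simpa [Function.comp_def] using
      hf'.comp_hasDerivAt 1 ((hasDerivAt_id (1 : ℝ)).smul_const x)
  have deriv_power : HasDerivAt (fun c : ℝ => c ^ k • f x) ((k : ℝ) • f x) 1 := by
    simpa using (hasDerivAt_zpow k (1 : ℝ) (.inl one_ne_zero)).smul_const (f x)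
  refine deriv_along_ray.unique (deriv_power.congr_of_eventuallyEq ?_)
  filter_upwards [lt_mem_nhds one_pos] with c hc using hhom c hc

variable [HasContDiffBump E]

theorem exists_contDiff_eq_of_le_norm {f : E → F} {n : ℕ∞} (hf : ContDiffOn ℝ n f {0}ᶜ) {ε : ℝ}
    (hε : 0 < ε) : ∃ g : E → F, ContDiff ℝ n g ∧ ∀ x, ε ≤ ‖x‖ → g x = f x := by
  let χ : ContDiffBump (0 : E) := ⟨ε / 2, ε, by positivity, by linarith⟩
  refine ⟨fun x => (1 - χ x) • f x, contDiff_iff_contDiffAt.2 fun x => ?_, fun x hx => ?_⟩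
  · rcases eq_or_ne x 0 with rfl | hx
    · refine (contDiffAt_const (c := (0 : F))).congr_of_eventuallyEq ?_
      filter_upwards [χ.eventuallyEq_one] with z hz
      simp [hz]
    · exact (contDiffAt_const.sub χ.contDiffAt).smul
        (hf.contDiffAt (isOpen_compl_singleton.mem_nhds hx))
  · simp [χ.zero_of_le_dist (by simpa using hx : ε ≤ dist x 0)]

end HomogeneousFunctions

section Translation

open Metric

variable {E F : Type*} [NormedAddCommGroup E] [MeasurableSpace E] [BorelSpace E]
  [NormedAddCommGroup F] [NormedSpace ℝ F]
  (μ : Measure E) [μ.IsAddLeftInvariant]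

theorem setIntegral_closedBall_eq_comp_add_left (f : E → F) (c : E) (r : ℝ) :
    ∫ x in closedBall c r, f x ∂μ = ∫ y in closedBall 0 r, f (c + y) ∂μ := by
  rw [← (measurePreserving_add_left μ c).setIntegral_preimage_emb (measurableEmbedding_addLeft c)]
  simp

end Translation

section Coordinates

variable {E F ι κ : Type*} [NormedAddCommGroup E] [NormedSpace ℝ E] [NormedAddCommGroup F]
  [NormedSpace ℝ F]

theorem contDiff_component [Fintype ι] [Fintype κ] {U : E → ι → κ → F} {n : WithTop ℕ∞}
    (hU : ContDiff ℝ n U) (i : ι) (j : κ) : ContDiff ℝ n fun z => U z i j :=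
  contDiff_pi.1 (contDiff_pi.1 hU i) j

theorem fderiv_component [Finite κ] {U : E → ι → κ → F} {x : E} (hU : DifferentiableAt ℝ U x)
    (v : E) (i : ι) (j : κ) : fderiv ℝ (fun z => U z i j) x v = fderiv ℝ U x v i j := by
  have := Fintype.ofFinite κ
  exact congr($((hasFDerivAt_pi'.1 (hasFDerivAt_pi'.1 hU.hasFDerivAt i) j).fderiv) v)

theorem fderiv_coordinate [Finite ι] {X : E → EuclideanSpace ℝ ι} {x : E}
    (hX : DifferentiableAt ℝ X x) (v : E) (i : ι) :
    fderiv ℝ (fun z => X z i) x v = fderiv ℝ X x v i := by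
  have := Fintype.ofFinite ι
  exact congr($(((EuclideanSpace.proj (𝕜 := ℝ) i).hasFDerivAt.comp x hX.hasFDerivAt).fderiv) v)

end Coordinates

section PartialDerivatives

open Filter Topology InnerProductSpace

variable {f : E3 → ℝ} {U : E3 → Fin 3 → Fin 3 → ℝ}

theorem fderiv_apply_eq_sum_pd (f : E3 → ℝ) (x v : E3) : fderiv ℝ f x v = ∑ k, v k * pd f k x := by
  conv_lhs => rw [← (EuclideanSpace.basisFun (Fin 3) ℝ).sum_repr v]
  simp [pd, e3]

theorem contDiff_pd {n : ℕ} (hf : ContDiff ℝ (n + 1) f) (i : Fin 3) : ContDiff ℝ n (pd f i) :=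
  (hf.fderiv_right le_rfl).clm_apply contDiff_const

theorem eventuallyEq_pd {g : E3 → ℝ} {x : E3} (h : f =ᶠ[𝓝 x] g) (k : Fin 3) :
    pd f k =ᶠ[𝓝 x] pd g k :=
  h.fderiv.mono fun _ hz => congr($hz (e3 k))

theorem pd_comp_add_left (f : E3 → ℝ) (c : E3) (k : Fin 3) :
    pd (fun y => f (c + y)) k = fun y => pd f k (c + y) := by
  ext y
  simp only [pd, fderiv_comp_add_left]

theorem divergence_eq_sum_pd {X : E3 → E3} {x : E3} (hX : DifferentiableAt ℝ X x) :
    divergence X x = ∑ i, pd (fun z => X z i) i x := by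
  rw [divergence_eq_sum_inner (EuclideanSpace.basisFun (Fin 3) ℝ)]
  simp [pd, e3, fderiv_coordinate hX, EuclideanSpace.inner_single_left]

theorem scalDiv_congr {V : E3 → Fin 3 → Fin 3 → ℝ} {x : E3} (h : U =ᶠ[𝓝 x] V) :
    scalDiv U x = scalDiv V x := by
  have component i j : (fun z => U z i j) =ᶠ[𝓝 x] fun z => V z i j := h.fun_comp (· i j)
  have second i j k l := (eventuallyEq_pd (eventuallyEq_pd (component i j) k) l).eq_of_nhds
  simp only [scalDiv, second]

theorem scalDiv_comp_add_left (U : E3 → Fin 3 → Fin 3 → ℝ) (c y : E3) :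
    scalDiv (fun z => U (c + z)) y = scalDiv U (c + y) := by
  have first i j := pd_comp_add_left (fun z => U z i j) c
  have second i j k := pd_comp_add_left (pd (fun z => U z i j) k) c
  simp only [scalDiv, first, second]

end PartialDerivatives

section TraceFunctional

open Metric InnerProductSpace

/-- The functional `∫_{∂B} tr_S(U) dA - 2 ∫_B tr(U) dV` of a tensor field on the unit ball `B` about
the origin; `G(s)` is its value at the translate `U(y) = T(sξ + y)`. -/
noncomputable def traceFunctional (U : E3 → Fin 3 → Fin 3 → ℝ) : ℝ :=
  ∫ y : sphere (0 : E3) 1, (trT U y - quadT U y y) ∂sphereMeasure -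
    2 * ∫ y in closedBall (0 : E3) 1, trT U y

variable {U V : E3 → Fin 3 → Fin 3 → ℝ}

theorem continuous_trT (hU : Continuous U) : Continuous (trT U) := by
  unfold trT
  fun_prop

theorem continuous_quadT_self (hU : Continuous U) : Continuous fun y => quadT U y y := by
  unfold quadT
  fun_prop

theorem integrableOn_unitBall {f : E3 → ℝ} (hf : Continuous f) :
    IntegrableOn f (closedBall 0 1) :=
  hf.continuousOn.integrableOn_compact (isCompact_closedBall 0 1)

theorem integrable_sphereMeasure_trT_sub_quadT (hU : Continuous U) :
    Integrable (fun y : sphere (0 : E3) 1 => trT U y - quadT U y y) sphereMeasure :=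
  integrable_toSphere_of_continuous ((continuous_trT hU).sub (continuous_quadT_self hU))

theorem traceFunctional_comp_add_left (T : E3 → Fin 3 → Fin 3 → ℝ) (c : E3) :
    traceFunctional (fun y => T (c + y)) =
      ∫ y : sphere (0 : E3) 1, (trT T (c + (y : E3)) - quadT T (c + (y : E3)) y) ∂sphereMeasure -
        2 * ∫ x in closedBall c 1, trT T x := by
  rw [setIntegral_closedBall_eq_comp_add_left]
  rfl

theorem traceFunctional_congr (h : ∀ y ∈ closedBall (0 : E3) 1, U y = V y) :
    traceFunctional U = traceFunctional V := by
  have on_sphere (y : sphere (0 : E3) 1) : U y = V y := h y (sphere_subset_closedBall y.2)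
  have on_ball : ∫ y in closedBall (0 : E3) 1, trT U y = ∫ y in closedBall (0 : E3) 1, trT V y :=
    setIntegral_congr_fun measurableSet_closedBall fun y hy => by simp only [trT, h y hy]
  rw [traceFunctional, traceFunctional, on_ball]
  simp only [trT, quadT, on_sphere]

theorem traceFunctional_smul (c : ℝ) (U : E3 → Fin 3 → Fin 3 → ℝ) :
    traceFunctional (fun y => c • U y) = c * traceFunctional U := by
  simp only [traceFunctional, trT, quadT, Pi.smul_apply, smul_eq_mul, mul_assoc, ← Finset.mul_sum,
    ← mul_sub, integral_const_mul]
  ring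

theorem traceFunctional_add (hU : Continuous U) (hV : Continuous V) :
    traceFunctional (fun y => U y + V y) = traceFunctional U + traceFunctional V := by
  have sphere_part : ∫ y : sphere (0 : E3) 1,
      (trT (fun y => U y + V y) y - quadT (fun y => U y + V y) y y) ∂sphereMeasure =
        (∫ y : sphere (0 : E3) 1, (trT U y - quadT U y y) ∂sphereMeasure) +
          ∫ y : sphere (0 : E3) 1, (trT V y - quadT V y y) ∂sphereMeasure := by
    rw [← integral_add (integrable_sphereMeasure_trT_sub_quadT hU)
      (integrable_sphereMeasure_trT_sub_quadT hV)]
    simp only [trT, quadT, Pi.add_apply, add_mul, Finset.sum_add_distrib, add_sub_add_comm]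
  have ball_part : ∫ y in closedBall (0 : E3) 1, trT (fun y => U y + V y) y =
      (∫ y in closedBall (0 : E3) 1, trT U y) + ∫ y in closedBall (0 : E3) 1, trT V y := by
    rw [← integral_add (integrableOn_unitBall (continuous_trT hU))
      (integrableOn_unitBall (continuous_trT hV))]
    simp only [trT, Pi.add_apply, Finset.sum_add_distrib]
  rw [traceFunctional, sphere_part, ball_part, traceFunctional, traceFunctional]
  ring

theorem hasDerivAt_traceFunctional {W W' : ℝ → E3 → Fin 3 → Fin 3 → ℝ}
    (hW : Continuous W.uncurry) (hW' : Continuous W'.uncurry)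
    (hderiv : ∀ s y, HasDerivAt (W · y) (W' s y) s) (s : ℝ) :
    HasDerivAt (fun s => traceFunctional (W s)) (traceFunctional (W' s)) s := by
  have component i j s y : HasDerivAt (fun s => W s y i j) (W' s y i j) s :=
    hasDerivAt_pi.1 (hasDerivAt_pi.1 (hderiv s y) i) j
  have trT_deriv s y : HasDerivAt (fun s => trT (W s) y) (trT (W' s) y) s :=
    .fun_sum fun j _ => component j j s y
  have quadT_deriv s y : HasDerivAt (fun s => quadT (W s) y y) (quadT (W' s) y y) s :=
    .fun_sum fun i _ => .fun_sum fun j _ => ((component i j s y).mul_const _).mul_const _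
  have trT_continuous {W : ℝ → E3 → Fin 3 → Fin 3 → ℝ} (hW : Continuous W.uncurry) :
      Continuous (Function.uncurry fun s => trT (W s)) := by
    unfold trT
    fun_prop
  have trS_continuous {W : ℝ → E3 → Fin 3 → Fin 3 → ℝ} (hW : Continuous W.uncurry) :
      Continuous (Function.uncurry fun s (y : sphere (0 : E3) 1) =>
        trT (W s) y - quadT (W s) y y) := by
    unfold trT quadT
    fun_prop
  have ball_part := hasDerivAt_setIntegral_of_continuous (μ := volume)
    (isCompact_closedBall (0 : E3) 1) measurableSet_closedBall (trT_continuous hW)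
    (trT_continuous hW') trT_deriv s
  have sphere_part := hasDerivAt_setIntegral_of_continuous (μ := (volume : Measure E3).toSphere)
    isCompact_univ .univ (trS_continuous hW) (trS_continuous hW')
    (fun s y => (trT_deriv s y).sub (quadT_deriv s y)) s
  simp only [setIntegral_univ] at sphere_part
  exact sphere_part.sub (ball_part.const_mul 2)

end TraceFunctional

section RadialDerivative

open Metric InnerProductSpace

variable {U : E3 → Fin 3 → Fin 3 → ℝ}

theorem contDiff_trT {n : WithTop ℕ∞} (hU : ContDiff ℝ n U) : ContDiff ℝ n (trT U) :=
  .sum fun j _ => contDiff_component hU j j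

theorem fderiv_trT_apply {x : E3} (hU : DifferentiableAt ℝ U x) (v : E3) :
    fderiv ℝ (trT U) x v = ∑ j, fderiv ℝ U x v j j := by
  have component j : DifferentiableAt ℝ (fun z => U z j j) x := by fun_prop
  simp only [← fderiv_component hU]
  unfold trT
  rw [fderiv_fun_sum fun j _ => component j, sum_apply]

/-- The ADM flux density `∑_j (D_j U_ij - D_i U_jj)`, the vector field whose divergence is the
leading term `scalDiv U` of the scalar curvature. -/
noncomputable def admFlux (U : E3 → Fin 3 → Fin 3 → ℝ) (y : E3) : E3 :=
  WithLp.toLp 2 fun i => ∑ j, (pd (fun z => U z i j) j y - pd (fun z => U z j j) i y)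

/-- The contraction `∑_i y_i U_ij` of a tensor field with the position vector, which on the unit
sphere is the outward normal; its tangential divergence yields the terms `y_i D_j U_ij`. -/
noncomputable def positionContraction (U : E3 → Fin 3 → Fin 3 → ℝ) (y : E3) : E3 :=
  WithLp.toLp 2 fun j => ∑ i, y i * U y i j

theorem contDiff_admFlux {n : ℕ} (hU : ContDiff ℝ (n + 1) U) : ContDiff ℝ n (admFlux U) := by
  have component i j k : ContDiff ℝ n (pd (fun z => U z i j) k) :=
    contDiff_pd (contDiff_component hU i j) k
  unfold admFlux
  fun_prop

theorem divergence_admFlux (hU : ContDiff ℝ 2 U) (x : E3) :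
    divergence (admFlux U) x = scalDiv U x := by
  have component i j k : DifferentiableAt ℝ (pd (fun z => U z i j) k) x :=
    (contDiff_pd (n := 1) (contDiff_component hU i j) k).differentiable one_ne_zero x
  rw [divergence_eq_sum_pd ((contDiff_admFlux (n := 1) hU).differentiable one_ne_zero x)]
  refine Finset.sum_congr rfl fun i _ => ?_
  rw [pd]
  simp only [admFlux]
  rw [fderiv_fun_sum fun j _ => (component i j j).fun_sub (component j j i), sum_apply]
  refine Finset.sum_congr rfl fun j _ => ?_
  rw [fderiv_fun_sub (component i j j) (component j j i), sub_apply, pd, pd]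

theorem contDiff_positionContraction {n : WithTop ℕ∞} (hU : ContDiff ℝ n U) :
    ContDiff ℝ n (positionContraction U) := by
  unfold positionContraction
  have := contDiff_component hU
  fun_prop

theorem fderiv_positionContraction_apply {x : E3} (hU : DifferentiableAt ℝ U x) (v : E3)
    (j : Fin 3) :
    fderiv ℝ (positionContraction U) x v j = ∑ i, (v i * U x i j + x i * fderiv ℝ U x v i j) := by
  have component i : HasFDerivAt (fun z => U z i j) (fderiv ℝ (fun z => U z i j) x) x :=
    DifferentiableAt.hasFDerivAt (by fun_prop)
  have coordinate := HasFDerivAt.fun_sum (u := Finset.univ) fun i _ =>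
    (EuclideanSpace.proj (𝕜 := ℝ) i).hasFDerivAt.fun_mul (component i)
  rw [← fderiv_coordinate
    (differentiableAt_euclidean.2 fun i => by unfold positionContraction; fun_prop)]
  refine congr($(coordinate.fderiv) v).trans ?_
  simp [fderiv_component hU, add_comm, mul_comm]

theorem divergence_positionContraction {x : E3} (hU : DifferentiableAt ℝ U x) :
    divergence (positionContraction U) x = trT U x + ∑ i, ∑ j, x i * pd (fun z => U z i j) j x := by
  simp only [divergence_eq_sum_inner (EuclideanSpace.basisFun (Fin 3) ℝ),
    EuclideanSpace.basisFun_apply, EuclideanSpace.inner_single_left,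
    fderiv_positionContraction_apply hU, pd, fderiv_component hU, Finset.sum_add_distrib]
  rw [Finset.sum_comm (f := fun i j => x i * _)]
  simp [trT, e3, Finset.sum_add_distrib]

theorem inner_positionContraction_self (U : E3 → Fin 3 → Fin 3 → ℝ) (y : E3) :
    ⟪positionContraction U y, y⟫_ℝ = quadT U y y := by
  simp only [positionContraction, quadT, PiLp.inner_apply, RCLike.inner_apply, conj_trivial,
    Finset.mul_sum]
  rw [Finset.sum_comm]
  exact Finset.sum_congr rfl fun i _ => Finset.sum_congr rfl fun j _ => by ring

theorem integral_closedBall_scalDiv (hU : ContDiff ℝ 2 U) :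
    ∫ y in closedBall (0 : E3) 1, scalDiv U y =
      ∫ y : sphere (0 : E3) 1, ⟪admFlux U y, y⟫_ℝ ∂sphereMeasure := by
  simp only [← divergence_admFlux hU]
  exact integral_closedBall_divergence (contDiff_admFlux (n := 1) hU)

theorem integral_closedBall_trT_radialDeriv (hU : ContDiff ℝ 1 U) :
    ∫ y in closedBall (0 : E3) 1, trT (fun y => fderiv ℝ U y y) y =
      ∫ y : sphere (0 : E3) 1, trT U y ∂sphereMeasure -
        3 * ∫ y in closedBall (0 : E3) 1, trT U y := by
  have := integral_closedBall_fderiv_self (contDiff_trT hU)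
  simp only [fderiv_trT_apply (hU.differentiable one_ne_zero _), finrank_euclideanSpace_fin,
    Nat.cast_ofNat] at this
  exact this

theorem integral_sphere_divergence_positionContraction (hU : ContDiff ℝ 1 U) :
    ∫ y : sphere (0 : E3) 1, (divergence (positionContraction U) y -
        ⟪fderiv ℝ (positionContraction U) y y, y⟫_ℝ) ∂sphereMeasure =
      2 * ∫ y : sphere (0 : E3) 1, quadT U y y ∂sphereMeasure := by
  have := integral_sphere_tangentialDivergence (contDiff_positionContraction hU)
  have finrank_sub_one : (Module.finrank ℝ E3 - 1 : ℝ) = 2 := by norm_num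
  simp only [finrank_sub_one, inner_positionContraction_self] at this
  exact this

theorem trT_sub_quadT_radialDeriv {y : E3} (hU : DifferentiableAt ℝ U y) :
    trT (fun y => fderiv ℝ U y y) y - quadT (fun y => fderiv ℝ U y y) y y =
      divergence (positionContraction U) y - ⟪fderiv ℝ (positionContraction U) y y, y⟫_ℝ -
        ⟪admFlux U y, y⟫_ℝ - (trT U y - quadT U y y) := by
  have flux : ⟪admFlux U y, y⟫_ℝ =
      ∑ i, ∑ j, y i * pd (fun z => U z i j) j y - trT (fun y => fderiv ℝ U y y) y := by
    simp only [admFlux, trT, PiLp.inner_apply, RCLike.inner_apply, conj_trivial,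
      ← fderiv_component hU, fderiv_apply_eq_sum_pd, Finset.mul_sum, mul_sub,
      Finset.sum_sub_distrib]
    rw [Finset.sum_comm (f := fun i j => y i * pd (fun z => U z j j) i y)]
  have contraction : ⟪fderiv ℝ (positionContraction U) y y, y⟫_ℝ =
      quadT U y y + quadT (fun y => fderiv ℝ U y y) y y := by
    simp only [PiLp.inner_apply, RCLike.inner_apply, conj_trivial,
      fderiv_positionContraction_apply hU, quadT, Finset.mul_sum, ← Finset.sum_add_distrib]
    rw [Finset.sum_comm]
    exact Finset.sum_congr rfl fun i _ => Finset.sum_congr rfl fun j _ => by ring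
  rw [flux, contraction, divergence_positionContraction hU]
  ring

theorem traceFunctional_radialDeriv (hU : ContDiff ℝ 2 U) :
    traceFunctional (fun y => fderiv ℝ U y y) =
      -3 * traceFunctional U - ∫ y in closedBall (0 : E3) 1, scalDiv U y := by
  have hU1 : ContDiff ℝ 1 U := hU.of_le one_le_two
  have hX := contDiff_positionContraction hU1
  have := hX.continuous_fderiv one_ne_zero
  have := continuous_divergence hX
  have := (contDiff_admFlux (n := 1) hU).continuous
  have tangential_integrable : Integrable (fun y : sphere (0 : E3) 1 =>
      divergence (positionContraction U) y - ⟪fderiv ℝ (positionContraction U) y y, y⟫_ℝ)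
      sphereMeasure :=
    integrable_toSphere_of_continuous (f := fun y => divergence (positionContraction U) y -
      ⟪fderiv ℝ (positionContraction U) y y, y⟫_ℝ) (by fun_prop)
  have flux_integrable : Integrable (fun y : sphere (0 : E3) 1 => ⟪admFlux U y, y⟫_ℝ)
      sphereMeasure :=
    integrable_toSphere_of_continuous (f := fun y => ⟪admFlux U y, y⟫_ℝ) (by fun_prop)
  have trT_integrable : Integrable (fun y : sphere (0 : E3) 1 => trT U y) sphereMeasure :=
    integrable_toSphere_of_continuous (continuous_trT hU.continuous)
  have quadT_integrable : Integrable (fun y : sphere (0 : E3) 1 => quadT U y y) sphereMeasure :=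
    integrable_toSphere_of_continuous (continuous_quadT_self hU.continuous)
  simp only [traceFunctional, trT_sub_quadT_radialDeriv (hU1.differentiable one_ne_zero _)]
  rw [integral_sub (by exact tangential_integrable.sub flux_integrable)
      (by exact trT_integrable.sub quadT_integrable),
    integral_sub tangential_integrable flux_integrable,
    integral_sub trT_integrable quadT_integrable,
    integral_sphere_divergence_positionContraction hU1, ← integral_closedBall_scalDiv hU,
    integral_closedBall_trT_radialDeriv hU1]
  ring

end RadialDerivative

section Translates

open Metric Filter Topology

theorem hasDerivAt_traceFunctional_translate {V : E3 → Fin 3 → Fin 3 → ℝ} (hV : ContDiff ℝ 1 V)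
    (ξ : E3) (s : ℝ) :
    HasDerivAt (fun s : ℝ => traceFunctional fun y => V (s • ξ + y))
      (traceFunctional fun y => fderiv ℝ V (s • ξ + y) ξ) s := by
  have := hV.continuous
  have := hV.continuous_fderiv one_ne_zero
  refine hasDerivAt_traceFunctional (W := fun s y => V (s • ξ + y))
    (W' := fun s y => fderiv ℝ V (s • ξ + y) ξ) (by fun_prop) (by fun_prop) (fun s y => ?_) s
  have line : HasDerivAt (fun s : ℝ => s • ξ + y) ξ s := by
    simpa using ((hasDerivAt_id s).smul_const ξ).add_const y
  exact (hV.differentiable one_ne_zero _).hasFDerivAt.comp_hasDerivAt s line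

theorem mul_traceFunctional_fderiv_of_euler {V : E3 → Fin 3 → Fin 3 → ℝ} (hV : ContDiff ℝ 2 V)
    {s : ℝ} {ξ : E3}
    (euler : ∀ y ∈ closedBall (0 : E3) 1,
      fderiv ℝ V (s • ξ + y) (s • ξ + y) = (-2 : ℝ) • V (s • ξ + y)) :
    s * traceFunctional (fun y => fderiv ℝ V (s • ξ + y) ξ) =
      traceFunctional (fun y => V (s • ξ + y)) +
        ∫ y in closedBall (0 : E3) 1, scalDiv V (s • ξ + y) := by
  have := hV.continuous
  have := hV.continuous_fderiv two_ne_zero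
  have radial := traceFunctional_radialDeriv (U := fun y => V (s • ξ + y)) (by fun_prop)
  have homogeneity :
      traceFunctional (fun y => s • fderiv ℝ V (s • ξ + y) ξ + fderiv ℝ V (s • ξ + y) y) =
        traceFunctional fun y => (-2 : ℝ) • V (s • ξ + y) :=
    traceFunctional_congr fun y hy => by rw [← euler y hy, map_add, map_smul]
  rw [traceFunctional_add (by fun_prop) (by fun_prop), traceFunctional_smul, traceFunctional_smul]
    at homogeneity
  simp only [fderiv_comp_add_left, scalDiv_comp_add_left] at radial
  linarith

theorem hasDerivAt_traceFunctional_of_euler {T : E3 → Fin 3 → Fin 3 → ℝ}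
    (hT : ContDiffOn ℝ 2 T {0}ᶜ) (euler : ∀ x ≠ 0, fderiv ℝ T x x = (-2 : ℝ) • T x)
    {s : ℝ} {ξ : E3} (hsξ : 1 < ‖s • ξ‖) :
    HasDerivAt (fun s : ℝ => traceFunctional fun y => T (s • ξ + y))
      ((traceFunctional (fun y => T (s • ξ + y)) +
        ∫ y in closedBall (0 : E3) 1, scalDiv T (s • ξ + y)) / s) s := by
  have hs : s ≠ 0 := (smul_ne_zero_iff.1 (norm_pos_iff.1 (one_pos.trans hsξ))).1
  obtain ⟨ε, hε, hεs⟩ : ∃ ε > 0, 1 + ε < ‖s • ξ‖ :=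
    ⟨(‖s • ξ‖ - 1) / 2, by linarith, by linarith⟩
  obtain ⟨V, hV, hVT⟩ := exists_contDiff_eq_of_le_norm (n := 2) hT hε
  have far {c : E3} (hc : 1 + ε < ‖c‖) {y : E3} (hy : y ∈ closedBall 0 1) : ε < ‖c + y‖ := by
    linarith [norm_sub_le_norm_add c y, mem_closedBall_zero_iff.1 hy]
  have V_eq_T {y : E3} (hy : y ∈ closedBall 0 1) : V =ᶠ[𝓝 (s • ξ + y)] T := by
    filter_upwards [continuous_norm.continuousAt.eventually (lt_mem_nhds (far hεs hy))]
      with x hx using hVT x (le_of_lt hx)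
  have functional_eq : (fun t : ℝ => traceFunctional fun y => T (t • ξ + y)) =ᶠ[𝓝 s]
      fun t => traceFunctional fun y => V (t • ξ + y) := by
    have norm_cont : Continuous fun t : ℝ => ‖t • ξ‖ := by fun_prop
    filter_upwards [norm_cont.continuousAt.eventually (lt_mem_nhds hεs)] with t ht
    exact traceFunctional_congr fun y hy => (hVT _ (far ht hy).le).symm
  have scalDiv_eq : ∫ y in closedBall (0 : E3) 1, scalDiv T (s • ξ + y) =
      ∫ y in closedBall (0 : E3) 1, scalDiv V (s • ξ + y) :=
    setIntegral_congr_fun measurableSet_closedBall fun y hy => (scalDiv_congr (V_eq_T hy)).symm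
  have euler_V y (hy : y ∈ closedBall (0 : E3) 1) :
      fderiv ℝ V (s • ξ + y) (s • ξ + y) = (-2 : ℝ) • V (s • ξ + y) := by
    rw [(V_eq_T hy).fderiv_eq, (V_eq_T hy).eq_of_nhds]
    exact euler _ (norm_pos_iff.1 (hε.trans (far hεs hy)))
  refine ((hasDerivAt_traceFunctional_translate (hV.of_le one_le_two) ξ s).congr_of_eventuallyEq
    functional_eq).congr_deriv ?_
  rw [eq_div_iff hs, mul_comm, mul_traceFunctional_fderiv_of_euler hV euler_V, ← scalDiv_eq,
    functional_eq.eq_of_nhds]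

end Translates

theorem ode_for_G_general (T : E3 → Fin 3 → Fin 3 → ℝ) (hsmooth : ContDiffOn ℝ 2 T {(0 : E3)}ᶜ)
    (hhom : ∀ c : ℝ, 0 < c → ∀ x : E3, x ≠ 0 → ∀ i j, T (c • x) i j = (c ^ 2)⁻¹ * T x i j)
    (ξ : E3) (G K : ℝ → ℝ)
    (hG : ∀ s : ℝ, G s =
      (∫ y : Metric.sphere (0 : E3) 1,
          (trT T (s • ξ + (y : E3)) - quadT T (s • ξ + (y : E3)) (y : E3)) ∂sphereMeasure)
        - 2 * ∫ x in Metric.closedBall (s • ξ) 1, trT T x)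
    (hK : ∀ s : ℝ, K s = ∫ x in Metric.closedBall (s • ξ) 1, scalDiv T x)
    {s : ℝ} (hsξ : 1 < ‖s • ξ‖) : HasDerivAt G ((G s + K s) / s) s := by
  have G_eq : G = fun s => traceFunctional fun y => T (s • ξ + y) :=
    funext fun s => (hG s).trans (traceFunctional_comp_add_left T (s • ξ)).symm
  have euler x (hx : x ≠ 0) : fderiv ℝ T x x = (-2 : ℝ) • T x := by
    have differentiable : DifferentiableAt ℝ T x :=
      (hsmooth.contDiffAt (isOpen_compl_singleton.mem_nhds hx)).differentiableAt two_ne_zero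
    exact_mod_cast fderiv_apply_self_of_homogeneous (k := -2) differentiable fun c hc => by
      ext i j
      rw [hhom c hc x hx, zpow_neg]
      rfl
  rw [hK, setIntegral_closedBall_eq_comp_add_left, G_eq]
  exact hasDerivAt_traceFunctional_of_euler hsmooth euler hsξ

theorem ode_for_G (T : E3 → Fin 3 → Fin 3 → ℝ)
    (hsmooth : ContDiffOn ℝ (⊤ : ℕ∞) (fun x => T x) {(0 : E3)}ᶜ)
    (hsym : ∀ x i j, T x i j = T x j i)
    (hhom : ∀ c : ℝ, 0 < c → ∀ x : E3, x ≠ 0 → ∀ i j, T (c • x) i j = (c ^ 2)⁻¹ * T x i j)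
    (ξ : E3) (hξ : 1 < ‖ξ‖) (G K : ℝ → ℝ)
    (hG : ∀ s : ℝ, G s =
      (∫ y : Metric.sphere (0 : E3) 1,
          (trT T (s • ξ + (y : E3)) - quadT T (s • ξ + (y : E3)) (y : E3)) ∂sphereMeasure)
        - 2 * ∫ x in Metric.closedBall (s • ξ) 1, trT T x)
    (hK : ∀ s : ℝ, K s = ∫ x in Metric.closedBall (s • ξ) 1, scalDiv T x) :
    ∀ s : ℝ, 1 ≤ s → HasDerivAt G ((G s + K s) / s) s := fun s hs =>
  ode_for_G_general T (hsmooth.of_le (by norm_cast)) hhom ξ G K hG hK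
    (by rw [norm_smul, norm_of_nonneg (by positivity)]; nlinarith)
end
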